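/- arXiv:math/0406013 — 2 statements merged into one kernel-verified Lean document; each statement's English description precedes it below -/
import Mathlib

section
/- For every m ≥ 2 and every ε > 0, there exists a group G generated by a set A of m elements such that G is amenable and the growth rate ω(G,A) is at least 2m - 1 - ε. Consequently, there is no constant c_m with 1 < c_m < 2m-1 such that every m-generated group G with ω(G,A) ≥ c_m is non-amenable; this answers de la Harpe's question in the negative. -/
open Filter Topology

/-- Evaluate a word over the alphabet `A^{±1}` (a letter is a pair `(i, b)`, where
`b = true` means the generator `σ i` and `b = false` means its inverse) in a group. -/
def wordEval {m : ℕ} {G : Type*} [Group G] (σ : Fin m → G)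
    (w : List (Fin m × Bool)) : G :=
  (w.map fun ℓ => if ℓ.2 then σ ℓ.1 else (σ ℓ.1)⁻¹).prod

/-- The ball `B(n) = {g ∈ G : ℓ(g) ≤ n}` of radius `n` in a group with respect to the
generating map `σ`: the set of elements represented by words of length at most `n`. -/
def ball {m : ℕ} {G : Type*} [Group G] (σ : Fin m → G) (n : ℕ) : Set G :=
  {g | ∃ w : List (Fin m × Bool), w.length ≤ n ∧ wordEval σ w = g}

/-- The growth rate `ω(G, A) = lim_{n→∞} |B(n)|^{1/n}`; the limit exists by
submultiplicativity of `|B(n)|`, hence equals the `limsup`. -/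
noncomputable def growthRate {m : ℕ} {G : Type*} [Group G] (σ : Fin m → G) : ℝ :=
  Filter.limsup (fun n : ℕ => ((ball σ n).ncard : ℝ) ^ (1 / (n : ℝ))) Filter.atTop

/-- A group is *amenable* if it admits a finitely additive, left-invariant probability
measure defined on all of its subsets. -/
def IsAmenable (G : Type*) [Group G] : Prop :=
  ∃ μ : Set G → ℝ,
    (∀ s : Set G, 0 ≤ μ s) ∧
    μ Set.univ = 1 ∧
    (∀ s t : Set G, Disjoint s t → μ (s ∪ t) = μ s + μ t) ∧
    (∀ (g : G) (s : Set G), μ ((g * ·) '' s) = μ s)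

/-- `G` is amenable, generated by the `m` elements `σ 0, …, σ (m-1)`, and has growth rate
at least `2m - 1 - ε` with respect to these generators. -/
def IsAmenableWithLargeGrowth (m : ℕ) (ε : ℝ) (G : Type) [Group G] (σ : Fin m → G) : Prop :=
  Subgroup.closure (Set.range σ) = ⊤ ∧ IsAmenable G ∧
    2 * (m : ℝ) - 1 - ε ≤ growthRate σ


lemma amenable_of_folner {W : Type} [Group W] [DecidableEq W] (F : ℕ → Finset W)
    (hne : ∀ n, (F n).Nonempty)
    (hF : ∀ g : W, Tendsto (fun n => (((F n).filter (fun x => x * g ∉ F n)).card : ℝ) / (F n).card)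
      atTop (𝓝 0)) : IsAmenable W := by
  classical
  let U : Ultrafilter ℕ := Ultrafilter.of atTop
  have hU : (U : Filter ℕ) ≤ atTop := Ultrafilter.of_le atTop
  let a : Set W → ℕ → ℝ := fun s n => (((F n).filter (fun x => x⁻¹ ∈ s)).card : ℝ) / (F n).card
  have hpos : ∀ n, (0:ℝ) < (F n).card := fun n => by exact_mod_cast (hne n).card_pos
  have ha : ∀ s n, a s n ∈ Set.Icc (0:ℝ) 1 := by
    intro s n
    refine ⟨by positivity, ?_⟩
    rw [div_le_one (hpos n)]
    exact_mod_cast Finset.card_filter_le _ _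
  have hlim : ∀ s, ∃ l ∈ Set.Icc (0:ℝ) 1, Tendsto (a s) U (𝓝 l) := by
    intro s
    have := isCompact_Icc.ultrafilter_le_nhds (U.map (a s)) (s := Set.Icc (0:ℝ) 1)
      (by rw [Ultrafilter.coe_map]; exact Filter.le_principal_iff.2 (Filter.mem_map.2 (Filter.univ_mem' (ha s))))
    obtain ⟨l, hl, h⟩ := this
    exact ⟨l, hl, h⟩
  choose μ hμ hμt using hlim
  refine ⟨μ, fun s => (hμ s).1, ?_, ?_, ?_⟩
  · refine tendsto_nhds_unique (hμt _) ?_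
    have : a Set.univ = fun _ => 1 := by
      funext n
      simp [a, (hpos n).ne']
    rw [this]
    exact tendsto_const_nhds
  · intro s t hst
    refine tendsto_nhds_unique (hμt _) ?_
    have : a (s ∪ t) = fun n => a s n + a t n := by
      funext n
      simp only [a, ← add_div, Set.mem_union, Finset.filter_or]
      rw [Finset.card_union_of_disjoint]
      · push_cast; rfl
      · rw [Finset.disjoint_filter]
        intro x _ h1 h2
        exact Set.disjoint_left.1 hst h1 h2
    rw [this]
    exact (hμt s).add (hμt t)
  · have key : ∀ (g : W) (s : Set W), μ ((g * ·) '' s) ≤ μ s := by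
      intro g s
      have h1 : Tendsto (fun n => a s n + (((F n).filter (fun x => x * g ∉ F n)).card : ℝ) / (F n).card)
          U (𝓝 (μ s + 0)) := (hμt s).add ((hF g).mono_left hU)
      rw [add_zero] at h1
      refine le_of_tendsto_of_tendsto' (hμt _) h1 ?_
      intro n
      simp only [a, ← add_div]
      refine div_le_div_of_nonneg_right ?_ (hpos n).le
      have : ((F n).filter (fun x => x⁻¹ ∈ (g * ·) '' s)) ⊆
          (((F n).filter (fun x => x⁻¹ ∈ s)).image (fun y => y * g⁻¹)) ∪
            ((F n).filter (fun x => x * g ∉ F n)) := by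
        intro x hx
        simp only [Finset.mem_filter, Set.mem_image, Finset.mem_union, Finset.mem_image] at hx ⊢
        obtain ⟨hx, y, hy, hxy⟩ := hx
        by_cases h : x * g ∈ F n
        · left
          refine ⟨x * g, ⟨h, ?_⟩, by simp⟩
          have : (x * g)⁻¹ = y := by
            rw [mul_inv_rev, ← hxy]; simp
          rwa [this]
        · right; exact ⟨hx, h⟩
      have h2 := (Finset.card_le_card this).trans (Finset.card_union_le _ _)
      have h3 := h2.trans (Nat.add_le_add_right Finset.card_image_le _)
      exact_mod_cast h3
    intro g s
    refine le_antisymm (key g s) ?_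
    have := key g⁻¹ ((g * ·) '' s)
    rw [Set.image_image] at this
    simpa using this

lemma amenable_subgroup {W : Type} [Group W] (h : IsAmenable W) (S : Subgroup W) :
    IsAmenable S := by
  obtain ⟨μ, h0, h1, h2, h3⟩ := h
  let q : W → Quotient (QuotientGroup.rightRel S) := fun g => Quotient.mk _ g
  have hq : ∀ g, g * (q g).out⁻¹ ∈ S := by
    intro g
    have := Quotient.exact ((q g).out_eq)
    change (QuotientGroup.rightRel S) _ _ at this
    rw [QuotientGroup.rightRel_apply] at this
    exact this
  let r : W → S := fun g => ⟨g * (q g).out⁻¹, hq g⟩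
  have hr : ∀ (s : S) g, r (s * g) = s * r g := by
    intro s g
    have : q (s * g) = q g := by
      apply Quotient.sound
      change (QuotientGroup.rightRel S) _ _
      rw [QuotientGroup.rightRel_apply]
      simp
    apply Subtype.ext
    simp [r, this, mul_assoc]
  refine ⟨fun s => μ (r ⁻¹' s), fun s => h0 _, by simpa using h1, ?_, ?_⟩
  · intro s t hst
    simp only [Set.preimage_union]
    exact h2 _ _ (hst.preimage r)
  · intro g s
    simp only
    rw [← h3 (g : W) (r ⁻¹' s)]
    congr 1
    ext x
    simp only [Set.mem_preimage, Set.mem_image]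
    constructor
    · rintro ⟨y, hy, hxy⟩
      refine ⟨(g : W)⁻¹ * x, ?_, by simp⟩
      have := hr g⁻¹ x
      simp only [Subgroup.coe_inv] at this
      rw [this, ← hxy]
      simpa using hy
    · rintro ⟨y, hy, rfl⟩
      exact ⟨r y, hy, (hr g y).symm⟩

/-- The height of a word: its total exponent. -/
def wordHt {m : ℕ} (w : List (Fin m × Bool)) : ℤ :=
  (w.map fun x => if x.2 then (1 : ℤ) else -1).sum

lemma wordHt_append {m : ℕ} (u v : List (Fin m × Bool)) :
    wordHt (u ++ v) = wordHt u + wordHt v := by simp [wordHt]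

lemma wordHt_cons {m : ℕ} (x : Fin m × Bool) (v : List (Fin m × Bool)) :
    wordHt (x :: v) = (if x.2 then (1 : ℤ) else -1) + wordHt v := by simp [wordHt]

lemma wordHt_ge {m : ℕ} (u : List (Fin m × Bool)) : -(u.length : ℤ) ≤ wordHt u := by
  induction u with
  | nil => simp [wordHt]
  | cons x u ih =>
    rw [wordHt_cons]
    push_cast [List.length_cons]
    split_ifs <;> omega

lemma wordHt_flip {m : ℕ} (u : List (Fin m × Bool)) :
    wordHt (u.map fun x => (x.1, !x.2)) = - wordHt u := by
  induction u with
  | nil => simp [wordHt]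
  | cons x u ih =>
    rw [List.map_cons, wordHt_cons, wordHt_cons, ih]
    cases x.2 <;> simp <;> ring

lemma exists_reduced_words (m : ℕ) (hm : 2 ≤ m) (l : ℕ) :
    ∃ S : Finset (List (Fin m × Bool)), (∀ u ∈ S, u.length = l ∧ FreeGroup.IsReduced u) ∧
      (2 * m - 1) ^ l ≤ S.card := by
  induction l with
  | zero => exact ⟨{[]}, by simp [FreeGroup.IsReduced], by simp⟩
  | succ l ih =>
    obtain ⟨S, hS, hc⟩ := ih
    let ok : List (Fin m × Bool) → Finset (Fin m × Bool) := fun u =>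
      Finset.univ.filter fun a => ∀ y ∈ u.head?, a.1 = y.1 → a.2 = y.2
    have hok : ∀ u, 2 * m - 1 ≤ (ok u).card := by
      intro u
      cases u with
      | nil =>
        simp [ok]; omega
      | cons y u =>
        have : Finset.univ.erase (y.1, !y.2) ⊆ ok (y :: u) := by
          intro a ha
          simp only [Finset.mem_erase, Finset.mem_univ, and_true] at ha
          simp only [ok, Finset.mem_filter, Finset.mem_univ, true_and, List.head?_cons,
            Option.mem_def, Option.some.injEq]
          rintro z rfl h
          by_contra h2
          apply ha
          ext1
          · exact h
          · revert h2
            cases a.2 <;> cases y.2 <;> simp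
        have h2 := Finset.card_le_card this
        rw [Finset.card_erase_of_mem (Finset.mem_univ _)] at h2
        simp at h2
        omega
    refine ⟨(S.sigma ok).image fun p => p.2 :: p.1, ?_, ?_⟩
    · intro w hw
      simp only [Finset.mem_image, Finset.mem_sigma] at hw
      obtain ⟨⟨u, a⟩, ⟨hu, ha⟩, rfl⟩ := hw
      simp only at hu ha ⊢
      refine ⟨by simp [(hS u hu).1], ?_⟩
      have h := (hS u hu).2
      simp only [ok, Finset.mem_filter, Finset.mem_univ, true_and] at ha
      unfold FreeGroup.IsReduced at *
      rw [List.isChain_cons]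
      exact ⟨ha, h⟩
    · rw [Finset.card_image_of_injective, Finset.card_sigma]
      · calc (2 * m - 1) ^ (l + 1) = (2 * m - 1) ^ l * (2 * m - 1) := pow_succ _ _
          _ ≤ S.card * (2 * m - 1) := Nat.mul_le_mul_right _ hc
          _ = ∑ u ∈ S, (2 * m - 1) := by simp
          _ ≤ _ := Finset.sum_le_sum fun u _ => hok u
      · rintro ⟨u, a⟩ ⟨v, b⟩ h
        simp only [List.cons.injEq] at h
        obtain ⟨rfl, rfl⟩ := h
        rfl

lemma exists_nonneg_words (m : ℕ) (hm : 2 ≤ m) (l : ℕ) :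
    ∃ S : Finset (List (Fin m × Bool)),
      (∀ u ∈ S, u.length = l ∧ FreeGroup.IsReduced u ∧ 0 ≤ wordHt u) ∧
      (2 * m - 1) ^ l ≤ 2 * S.card := by
  classical
  obtain ⟨S, hS, hc⟩ := exists_reduced_words m hm l
  have hsplit := Finset.card_filter_add_card_filter_not (s := S) (fun u => 0 ≤ wordHt u)
  by_cases h : (S.filter fun u => ¬ 0 ≤ wordHt u).card ≤ (S.filter fun u => 0 ≤ wordHt u).card
  · refine ⟨S.filter fun u => 0 ≤ wordHt u, ?_, by omega⟩
    intro u hu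
    rw [Finset.mem_filter] at hu
    exact ⟨(hS u hu.1).1, (hS u hu.1).2, hu.2⟩
  · refine ⟨(S.filter fun u => ¬ 0 ≤ wordHt u).image (List.map fun x => (x.1, !x.2)), ?_, ?_⟩
    · intro w hw
      simp only [Finset.mem_image, Finset.mem_filter] at hw
      obtain ⟨u, ⟨hu, hh⟩, rfl⟩ := hw
      refine ⟨by simp [(hS u hu).1], ?_, by rw [wordHt_flip]; omega⟩
      have := (hS u hu).2
      unfold FreeGroup.IsReduced at *
      rw [List.isChain_map]
      refine this.imp ?_
      intro a b hab h
      simp [hab h]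
    · rw [Finset.card_image_of_injective]
      · omega
      · apply List.map_injective_iff.2
        rintro ⟨a, b⟩ ⟨c, d⟩ h
        simpa using h

/-- Properties of a block. -/
def GoodBlock {m : ℕ} (L : ℕ) (a : Fin m × Bool) (b : List (Fin m × Bool)) : Prop :=
  b.length = L ∧ FreeGroup.IsReduced b ∧ 1 ≤ wordHt b ∧ (∀ x ∈ b.head?, x = a) ∧
    (∀ x ∈ b.getLast?, x.1 ≠ a.1)

lemma exists_blocks (m : ℕ) (hm : 2 ≤ m) (l : ℕ) :
    ∃ (a : Fin m × Bool) (S : Finset (List (Fin m × Bool))),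
      (∀ u ∈ S, GoodBlock (l + 5) a u) ∧ (2 * m - 1) ^ l ≤ 2 * S.card := by
  classical
  obtain ⟨S, hS, hc⟩ := exists_nonneg_words m hm l
  let i0 : Fin m := ⟨0, by omega⟩
  let i1 : Fin m := ⟨1, by omega⟩
  have h01 : i1 ≠ i0 := by simp [i0, i1]
  let e : List (Fin m × Bool) → Bool := fun u => (u.head?.map Prod.snd).getD true
  let e' : List (Fin m × Bool) → Bool := fun u => (u.getLast?.map Prod.snd).getD true
  let f : List (Fin m × Bool) → List (Fin m × Bool) := fun u =>
    (i0, true) :: (i0, true) :: (i0, true) :: (i1, e u) :: (u ++ [(i1, e' u)])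
  refine ⟨(i0, true), S.image f, ?_, ?_⟩
  · intro w hw
    rw [Finset.mem_image] at hw
    obtain ⟨u, hu, rfl⟩ := hw
    obtain ⟨h1, h2, h3⟩ := hS u hu
    refine ⟨by simp [f, h1], ?_, ?_, ?_, ?_⟩
    · unfold FreeGroup.IsReduced at *
      simp only [f, List.isChain_cons_cons]
      refine ⟨by simp, by simp, fun h => absurd h.symm h01, ?_⟩
      cases u with
      | nil => simp [e, e']
      | cons x u =>
        rw [List.cons_append, List.isChain_cons_cons, ← List.cons_append, List.isChain_append]
        refine ⟨by simp [e], h2, by simp, ?_⟩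
        intro y hy z hz
        simp only [List.head?_cons, Option.mem_def, Option.some.injEq] at hz hy
        subst hz
        simp [e', hy]
    · simp only [f, wordHt_cons, wordHt_append]
      have : wordHt ([] : List (Fin m × Bool)) = 0 := by simp [wordHt]
      rw [this]
      have key : ∀ b : Bool, (-1 : ℤ) ≤ if b = true then 1 else -1 := by decide
      have k1 := key (e u)
      have k2 := key (e' u)
      rw [if_pos trivial]
      linarith
    · simp [f]
    · intro x hx
      simp [f, List.getLast?_cons] at hx
      rw [← hx]
      exact h01
  · rw [Finset.card_image_of_injOn]
    · exact hc
    · intro u hu v hv h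
      simp only [f, List.cons.injEq, true_and] at h
      exact (List.append_inj h.2 (by rw [(hS u hu).1, (hS v hv).1])).1

lemma exists_good_words {m : ℕ} (L : ℕ) (hL : 1 ≤ L) (a : Fin m × Bool)
    (S : Finset (List (Fin m × Bool)))
    (hS : ∀ u ∈ S, GoodBlock L a u) (k : ℕ) :
    ∃ T : Finset (List (Fin m × Bool)), T.card = S.card ^ k ∧ ∀ w ∈ T, w.length = k * L ∧
      FreeGroup.IsReduced w ∧ (∀ x ∈ w.head?, x = a) ∧
      (∀ u, u <+: w → (u.length : ℤ) - (L * L + L) ≤ L * wordHt u) ∧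
      (∀ u, u <:+: w → (u.length : ℤ) - 2 * (L * L + L) ≤ L * wordHt u) := by
  classical
  induction k with
  | zero =>
    refine ⟨{[]}, by simp, ?_⟩
    simp [FreeGroup.IsReduced, wordHt]
    positivity
  | succ k ih =>
    obtain ⟨T, hT, hw⟩ := ih
    refine ⟨(S ×ˢ T).image fun p => p.1 ++ p.2, ?_, ?_⟩
    · rw [Finset.card_image_of_injOn, Finset.card_product, hT, pow_succ, mul_comm]
      rintro ⟨u, v⟩ h1 ⟨u', v'⟩ h2 h
      simp only [Finset.coe_product, Set.mem_prod, Finset.mem_coe] at h1 h2 h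
      have := List.append_inj h (by rw [(hS u h1.1).1, (hS u' h2.1).1])
      rw [this.1, this.2]
    · intro w hw'
      simp only [Finset.mem_image, Finset.mem_product, Prod.exists] at hw'
      obtain ⟨b, v, ⟨hb, hv⟩, rfl⟩ := hw'
      obtain ⟨b1, b2, b3, b4, b5⟩ := hS b hb
      obtain ⟨v1, v2, v3, v4, v5⟩ := hw v hv
      have hshort : ∀ u : List (Fin m × Bool), u.length ≤ L →
          (u.length : ℤ) - (L * L + L) ≤ L * wordHt u := by
        intro u hu
        have h1 := wordHt_ge u
        have h2 : (u.length : ℤ) ≤ L := by exact_mod_cast hu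
        have h3 : -(L : ℤ) ≤ wordHt u := by omega
        nlinarith
      refine ⟨by simp [b1, v1]; ring, ?_, ?_, ?_, ?_⟩
      · unfold FreeGroup.IsReduced at *
        rw [List.isChain_append]
        refine ⟨b2, v2, fun x hx y hy h => ?_⟩
        rw [v3 y hy] at h
        exact absurd h (b5 x hx)
      · intro x hx
        cases b with
        | nil => simp at b1; omega
        | cons y b => simpa using b4 x (by simpa using hx)
      · intro u hu
        obtain ⟨t, ht⟩ := hu
        rcases List.append_eq_append_iff.mp ht with ⟨c, hc, _⟩ | ⟨c, hc, hc2⟩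
        · apply hshort
          rw [← b1, hc]
          simp
        · have h1 := v4 c ⟨t, hc2.symm⟩
          subst hc
          rw [wordHt_append]
          push_cast [List.length_append, b1]
          nlinarith
      · intro u hu
        rw [List.infix_append_iff] at hu
        rcases hu with hu | hu | ⟨c, d, rfl, hc, hd⟩
        · have := hshort u (by rw [← b1]; exact hu.length_le)
          nlinarith
        · exact v5 u hu
        · have h1 := hshort c (by rw [← b1]; exact hc.length_le)
          have h2 := v4 d hd
          rw [wordHt_append]
          push_cast [List.length_append]
          linarith

/-- Lamplighter type group over `H`, with lamps on `H × ι`. -/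
@[ext] structure Lamp (H : Type) (ι : Type) where
  c : Finset (H × ι)
  h : H

namespace Lamp

variable {H ι : Type} [Group H] [DecidableEq H] [DecidableEq ι]

/-- Translate a lamp configuration. -/
def sh (h : H) (c : Finset (H × ι)) : Finset (H × ι) := c.image fun e => (h * e.1, e.2)

lemma mem_sh (h : H) (c : Finset (H × ι)) (e : H × ι) :
    e ∈ sh h c ↔ (h⁻¹ * e.1, e.2) ∈ c := by
  simp only [sh, Finset.mem_image]
  constructor
  · rintro ⟨a, ha, rfl⟩
    simpa using ha
  · intro h1
    exact ⟨_, h1, by simp⟩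

instance : Group (Lamp H ι) where
  mul x y := ⟨symmDiff x.c (sh x.h y.c), x.h * y.h⟩
  one := ⟨∅, 1⟩
  inv x := ⟨sh x.h⁻¹ x.c, x.h⁻¹⟩
  mul_assoc x y z := by
    apply Lamp.ext
    · change symmDiff (symmDiff x.c (sh x.h y.c)) (sh (x.h * y.h) z.c) =
        symmDiff x.c (sh x.h (symmDiff y.c (sh y.h z.c)))
      rw [symmDiff_assoc]
      congr 1
      ext e
      simp only [Finset.mem_symmDiff, mem_sh, mul_inv_rev, mul_assoc]
    · exact mul_assoc _ _ _
  one_mul x := by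
    apply Lamp.ext
    · change symmDiff ∅ (sh 1 x.c) = x.c
      ext e
      simp [Finset.mem_symmDiff, mem_sh]
    · exact one_mul _
  mul_one x := by
    apply Lamp.ext
    · change symmDiff x.c (sh x.h ∅) = x.c
      ext e
      simp [Finset.mem_symmDiff, mem_sh]
    · exact mul_one _
  inv_mul_cancel x := by
    apply Lamp.ext
    · change symmDiff (sh x.h⁻¹ x.c) (sh x.h⁻¹ x.c) = ∅
      simp
    · exact inv_mul_cancel _

lemma mul_c (x y : Lamp H ι) : (x * y).c = symmDiff x.c (sh x.h y.c) := rfl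
lemma mul_h (x y : Lamp H ι) : (x * y).h = x.h * y.h := rfl
lemma inv_c (x : Lamp H ι) : (x⁻¹).c = sh x.h⁻¹ x.c := rfl
lemma inv_h (x : Lamp H ι) : (x⁻¹).h = x.h⁻¹ := rfl
lemma one_c : (1 : Lamp H ι).c = ∅ := rfl
lemma one_h : (1 : Lamp H ι).h = 1 := rfl

/-- Projection to the base group. -/
def proj : Lamp H ι →* H where
  toFun x := x.h
  map_one' := rfl
  map_mul' _ _ := rfl

end Lamp

lemma wordEval_cons {m : ℕ} {G : Type*} [Group G] (σ : Fin m → G) (x : Fin m × Bool)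
    (w : List (Fin m × Bool)) :
    wordEval σ (x :: w) = (if x.2 then σ x.1 else (σ x.1)⁻¹) * wordEval σ w := by
  simp [wordEval]

lemma wordEval_nil {m : ℕ} {G : Type*} [Group G] (σ : Fin m → G) :
    wordEval σ [] = 1 := by
  simp [wordEval]

lemma map_wordEval {m : ℕ} {G G' : Type*} [Group G] [Group G'] (f : G →* G') (σ : Fin m → G)
    (w : List (Fin m × Bool)) : f (wordEval σ w) = wordEval (fun i => f (σ i)) w := by
  induction w with
  | nil => simp [wordEval_nil]
  | cons x w ih =>
    rw [wordEval_cons, wordEval_cons, map_mul, ih]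
    split_ifs <;> simp

/-- The generators of the lamp group. -/
def lampGen {m : ℕ} {H : Type} (η : Fin m → H) [Group H] (i : Fin m) : Lamp H (Fin m) :=
  ⟨{(1, i)}, η i⟩

section
set_option linter.unusedSectionVars false
variable {m : ℕ} {H : Type} [Group H] [DecidableEq H] (η : Fin m → H)

lemma lamp_h (w : List (Fin m × Bool)) :
    (wordEval (lampGen η) w).h = wordEval η w :=
  map_wordEval (Lamp.proj : Lamp H (Fin m) →* H) (lampGen η) w

/-- The starting vertex (tail) of the edge traversed by a letter from `1`. -/
def letterEdge (x : Fin m × Bool) : H × Fin m := (if x.2 then 1 else (η x.1)⁻¹, x.1)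

/-- value of a letter -/
def letterVal {G : Type*} [Group G] (η : Fin m → G) (x : Fin m × Bool) : G :=
  if x.2 then η x.1 else (η x.1)⁻¹

lemma lamp_c_cons (x : Fin m × Bool) (w : List (Fin m × Bool)) :
    (wordEval (lampGen η) (x :: w)).c =
      symmDiff {letterEdge η x} (Lamp.sh (letterVal η x) (wordEval (lampGen η) w).c) := by
  rw [wordEval_cons, Lamp.mul_c]
  rcases x with ⟨i, b⟩
  cases b
  · simp [letterEdge, letterVal, lampGen, Lamp.inv_c, Lamp.inv_h, Lamp.sh]
  · simp [letterEdge, letterVal, lampGen]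

lemma lamp_supp (w : List (Fin m × Bool)) (e : H × Fin m)
    (he : e ∈ (wordEval (lampGen η) w).c) :
    (∃ u, u <+: w ∧ wordEval η u = e.1) ∧ (∃ u, u <+: w ∧ wordEval η u = e.1 * η e.2) := by
  induction w generalizing e with
  | nil => simp [wordEval_nil, Lamp.one_c] at he
  | cons x w ih =>
    rw [lamp_c_cons, Finset.mem_symmDiff] at he
    rcases he with he | he
    · have he1 := Finset.mem_singleton.1 he.1
      have h1 : ∃ u, u <+: x :: w ∧ wordEval η u = 1 := ⟨[], List.nil_prefix, wordEval_nil _⟩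
      have h2 : ∃ u, u <+: x :: w ∧ wordEval η u = letterVal η x :=
        ⟨[x], by simp, by rw [wordEval_cons, wordEval_nil]; simp [letterVal]⟩
      subst he1
      rcases x with ⟨i, b⟩
      cases b
      · simpa [letterEdge, letterVal] using And.intro h2 h1
      · simpa [letterEdge, letterVal] using And.intro h1 h2
    · have h3 := ih _ ((Lamp.mem_sh _ _ _).1 he.1)
      obtain ⟨⟨u, hu, hu2⟩, ⟨v, hv, hv2⟩⟩ := h3
      refine ⟨⟨x :: u, by simpa using hu, ?_⟩, ⟨x :: v, by simpa using hv, ?_⟩⟩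
      · rw [wordEval_cons, hu2]; simp [letterVal]
      · rw [wordEval_cons, hv2]; simp [letterVal, mul_assoc]

/-- No nonempty factor of `w` is trivial in `H`. -/
def SelfAvoid (w : List (Fin m × Bool)) : Prop :=
  ∀ u, u <:+: w → u ≠ [] → wordEval η u ≠ 1

lemma lamp_not_mem (x y : Fin m × Bool) (w : List (Fin m × Bool)) (h : SelfAvoid η (x :: w)) :
    letterEdge η y ∉ Lamp.sh (letterVal η x) (wordEval (lampGen η) w).c := by
  intro hmem
  obtain ⟨⟨u, hu, hu2⟩, ⟨v, hv, hv2⟩⟩ := lamp_supp η w _ ((Lamp.mem_sh _ _ _).1 hmem)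
  have key : ∀ u, u <+: w → wordEval η u = (letterVal η x)⁻¹ → False := by
    intro u hu hu2
    refine h (x :: u) ?_ (by simp) ?_
    · exact List.IsPrefix.isInfix (by simpa using hu)
    · rw [wordEval_cons, hu2]; simp [letterVal]
  rcases y with ⟨i, b⟩
  cases b
  · exact key v hv (by rw [hv2]; simp [letterEdge, mul_assoc])
  · exact key u hu (by rw [hu2]; simp [letterEdge])

lemma SelfAvoid.tail {x : Fin m × Bool} {w : List (Fin m × Bool)} (h : SelfAvoid η (x :: w)) :
    SelfAvoid η w := fun u hu => h u (List.infix_cons hu)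

lemma lamp_inj (w w' : List (Fin m × Bool)) (h : SelfAvoid η w) (h' : SelfAvoid η w')
    (heq : wordEval (lampGen η) w = wordEval (lampGen η) w') : w = w' := by
  induction w generalizing w' with
  | nil =>
    cases w' with
    | nil => rfl
    | cons y w' =>
      exfalso
      have hm : letterEdge η y ∈ (wordEval (lampGen η) (y :: w')).c := by
        rw [lamp_c_cons, Finset.mem_symmDiff]
        exact Or.inl ⟨by simp, lamp_not_mem η y y w' h'⟩
      rw [← heq, wordEval_nil, Lamp.one_c] at hm
      simp at hm
  | cons x w ih =>
    cases w' with
    | nil =>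
      exfalso
      have hm : letterEdge η x ∈ (wordEval (lampGen η) (x :: w)).c := by
        rw [lamp_c_cons, Finset.mem_symmDiff]
        exact Or.inl ⟨by simp, lamp_not_mem η x x w h⟩
      rw [heq, wordEval_nil, Lamp.one_c] at hm
      simp at hm
    | cons y w' =>
      have hm : letterEdge η x ∈ (wordEval (lampGen η) (x :: w)).c := by
        rw [lamp_c_cons, Finset.mem_symmDiff]
        exact Or.inl ⟨by simp, lamp_not_mem η x x w h⟩
      rw [heq, lamp_c_cons, Finset.mem_symmDiff] at hm
      have hxy : letterEdge η x = letterEdge η y := by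
        rcases hm with hm | hm
        · exact Finset.mem_singleton.1 hm.1
        · exact absurd hm.1 (lamp_not_mem η y x w' h')
      have hxx : x = y := by
        have hη : η x.1 ≠ 1 := by
          have := h [x] ⟨[], w, by simp⟩ (by simp)
          rw [wordEval_cons, wordEval_nil] at this
          intro h0
          apply this
          simp [h0]
        rcases x with ⟨i, b⟩
        rcases y with ⟨j, d⟩
        simp only [letterEdge, Prod.mk.injEq] at hxy hη
        obtain ⟨h1, rfl⟩ := hxy
        cases b <;> cases d <;> simp_all
      subst hxx
      rw [wordEval_cons, wordEval_cons] at heq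
      rw [ih w' (SelfAvoid.tail η h) (SelfAvoid.tail η h') (mul_left_cancel heq)]

end

lemma exists_perm (m D : ℕ) : ∃ (V : Type) (_ : Fintype V) (_ : DecidableEq V)
    (π : Fin m → Equiv.Perm V),
    ∀ w : List (Fin m × Bool), w.length ≤ D → FreeGroup.IsReduced w → w ≠ [] →
      wordEval π w ≠ 1 := by
  classical
  let V := {g : FreeGroup (Fin m) // g.norm ≤ D}
  have hfin : Finite V := by
    have h1 : Finite {l : List (Fin m × Bool) // l.length ≤ D} :=
      (List.finite_length_le (Fin m × Bool) D).to_subtype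
    refine Finite.of_injective
      (fun g : V => (⟨g.1.toWord, g.2⟩ : {l : List (Fin m × Bool) // l.length ≤ D})) ?_
    intro a b h
    apply Subtype.ext
    exact FreeGroup.toWord_injective (Subtype.ext_iff.1 h)
  have hft : Fintype V := Fintype.ofFinite V
  let gen : Fin m → FreeGroup (Fin m) := FreeGroup.of
  let E : ∀ i, {v : V // (gen i * v.1).norm ≤ D} ≃ {v : V // ((gen i)⁻¹ * v.1).norm ≤ D} := fun i =>
    { toFun := fun v => ⟨⟨gen i * v.1.1, v.2⟩, by simpa using v.1.2⟩
      invFun := fun v => ⟨⟨(gen i)⁻¹ * v.1.1, v.2⟩, by simpa using v.1.2⟩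
      left_inv := fun v => by simp
      right_inv := fun v => by simp }
  let π : Fin m → Equiv.Perm V := fun i => (E i).extendSubtype
  have h1 : ∀ i (v : V) (h : (gen i * v.1).norm ≤ D), π i v = ⟨gen i * v.1, h⟩ := by
    intro i v h
    exact Equiv.extendSubtype_apply_of_mem (E i) v h
  have h2 : ∀ i (v : V) (h : ((gen i)⁻¹ * v.1).norm ≤ D), (π i)⁻¹ v = ⟨(gen i)⁻¹ * v.1, h⟩ := by
    intro i v h
    rw [Equiv.Perm.inv_eq_iff_eq, h1 i _ (by simpa using v.2)]
    simp
  have h3 : ∀ (w : List (Fin m × Bool)) (h : w.length ≤ D),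
      wordEval π w ⟨1, by simp⟩ = ⟨FreeGroup.mk w, FreeGroup.norm_mk_le.trans h⟩ := by
    intro w
    induction w with
    | nil => intro h; simp [wordEval_nil, FreeGroup.one_eq_mk]
    | cons x w ih =>
      intro h
      have hn : (FreeGroup.mk (x :: w)).norm ≤ D := FreeGroup.norm_mk_le.trans h
      rw [wordEval_cons, Equiv.Perm.mul_apply, ih (by simp at h; omega)]
      rcases x with ⟨i, b⟩
      cases b
      · have h4 : FreeGroup.mk ((i, false) :: w) = (gen i)⁻¹ * FreeGroup.mk w := by
          simp [gen, FreeGroup.of, FreeGroup.inv_mk, FreeGroup.invRev]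
        simp only [h4] at hn ⊢
        exact h2 i _ hn
      · have h4 : FreeGroup.mk ((i, true) :: w) = gen i * FreeGroup.mk w := by
          simp [gen, FreeGroup.of]
        simp only [h4] at hn ⊢
        exact h1 i _ hn
  refine ⟨V, hft, inferInstance, π, ?_⟩
  intro w hw hr hne h
  have h4 := h3 w hw
  rw [h] at h4
  have h5 : (1 : FreeGroup (Fin m)) = FreeGroup.mk w := Subtype.ext_iff.1 h4
  have h6 := congrArg FreeGroup.toWord h5
  rw [FreeGroup.toWord_one, FreeGroup.toWord_mk, hr.reduce_eq] at h6
  exact hne h6.symm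

section
set_option linter.unusedSectionVars false
variable {K ι : Type} [Group K] [Fintype K] [DecidableEq K] [Fintype ι] [DecidableEq ι]

/-- Boxes in `K × ℤ`. -/
noncomputable def boxP (K : Type) [Fintype K] (n : ℕ) : Finset (K × Multiplicative ℤ) :=
  Finset.univ ×ˢ (Finset.Icc (-(n : ℤ)) n).map Multiplicative.ofAdd.toEmbedding

lemma mem_boxP (n : ℕ) (h : K × Multiplicative ℤ) :
    h ∈ boxP K n ↔ -(n : ℤ) ≤ h.2.toAdd ∧ h.2.toAdd ≤ n := by
  simp only [boxP, Finset.mem_product, Finset.mem_univ, true_and, Finset.mem_map, Finset.mem_Icc]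
  constructor
  · rintro ⟨a, ha, h2⟩
    rw [← h2]
    exact ha
  · intro h2
    exact ⟨_, h2, rfl⟩

lemma lamp_amenable : IsAmenable (Lamp (K × Multiplicative ℤ) ι) := by
  classical
  let Q : ℕ → Finset (Finset ((K × Multiplicative ℤ) × ι)) := fun n =>
    (boxP K (2 * n) ×ˢ (Finset.univ : Finset ι)).powerset
  let mk : Finset ((K × Multiplicative ℤ) × ι) × (K × Multiplicative ℤ) →
    Lamp (K × Multiplicative ℤ) ι := fun p => ⟨p.1, p.2⟩
  have hmk : Function.Injective mk := by
    rintro ⟨a, b⟩ ⟨c, d⟩ h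
    simp only [mk, Lamp.mk.injEq] at h
    rw [h.1, h.2]
  let F : ℕ → Finset (Lamp (K × Multiplicative ℤ) ι) := fun n => (Q n ×ˢ boxP K n).image mk
  have memF : ∀ n x, x ∈ F n ↔ (∀ e ∈ x.c, e.1 ∈ boxP K (2 * n)) ∧ x.h ∈ boxP K n := by
    intro n x
    simp only [F, Finset.mem_image, Finset.mem_product, Q, Finset.mem_powerset]
    constructor
    · rintro ⟨⟨a, b⟩, ⟨h1, h2⟩, rfl⟩
      refine ⟨fun e he => ?_, h2⟩
      exact (Finset.mem_product.1 (h1 he)).1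
    · rintro ⟨h1, h2⟩
      refine ⟨(x.c, x.h), ⟨fun e he => ?_, h2⟩, rfl⟩
      simpa using h1 e he
  have cardF : ∀ n, (F n).card = (Q n).card * (Fintype.card K * (2 * n + 1)) := by
    intro n
    simp only [F]
    rw [Finset.card_image_of_injective _ hmk, Finset.card_product, boxP, Finset.card_product]
    simp only [Finset.card_univ, Finset.card_map, Int.card_Icc]
    congr 2
    omega
  have hQ : ∀ n, 0 < (Q n).card := fun n => by simp [Q]
  refine amenable_of_folner F ?_ ?_
  · intro n
    rw [← Finset.card_pos, cardF]
    have := hQ n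
    have := Fintype.card_pos (α := K)
    positivity
  · intro g
    obtain ⟨r, hr⟩ : ∃ r : ℕ, ∀ e ∈ g.c, (Multiplicative.toAdd e.1.2).natAbs ≤ r :=
      ⟨g.c.sup fun e => (Multiplicative.toAdd e.1.2).natAbs, fun e he =>
        Finset.le_sup (f := fun e : (K × Multiplicative ℤ) × ι =>
          (Multiplicative.toAdd e.1.2).natAbs) he⟩
    set z : ℕ := (Multiplicative.toAdd g.h.2).natAbs with hz
    have hbound : ∀ n, r ≤ n → ((F n).filter (fun x => x * g ∉ F n)).card ≤
        (Q n).card * (Fintype.card K * (2 * z)) := by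
      intro n hn
      let Bd : Finset ℤ := Finset.Ioc ((n : ℤ) - z) n ∪ Finset.Ico (-(n : ℤ)) (-n + z)
      have hBd : Bd.card ≤ 2 * z := by
        refine (Finset.card_union_le _ _).trans ?_
        simp only [Int.card_Ioc, Int.card_Ico]
        omega
      have hsub : ((F n).filter (fun x => x * g ∉ F n)) ⊆
          (Q n ×ˢ ((Finset.univ : Finset K) ×ˢ
            Bd.map Multiplicative.ofAdd.toEmbedding)).image mk := by
        intro x hx
        rw [Finset.mem_filter] at hx
        obtain ⟨hx, hxg⟩ := hx
        rw [memF] at hx hxg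
        rw [Finset.mem_image]
        refine ⟨(x.c, x.h), ?_, rfl⟩
        simp only [Finset.mem_product, Finset.mem_univ, true_and, Finset.mem_map]
        refine ⟨?_, Multiplicative.toAdd x.h.2, ?_, rfl⟩
        · simp only [Q, Finset.mem_powerset]
          intro e he
          simpa using hx.1 e he
        · have hx2 := (mem_boxP _ _).1 hx.2
          have h1 : ∀ e ∈ (x * g).c, e.1 ∈ boxP K (2 * n) := by
            intro e he
            rw [Lamp.mul_c, Finset.mem_symmDiff] at he
            rcases he with he | he
            · exact hx.1 e he.1
            · have h3 := hr _ ((Lamp.mem_sh _ _ _).1 he.1)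
              rw [mem_boxP]
              simp only [Prod.snd_mul, Prod.snd_inv, toAdd_mul, toAdd_inv] at h3
              push_cast
              omega
          have h2 : ¬ (x * g).h ∈ boxP K n := fun h => hxg ⟨h1, h⟩
          rw [mem_boxP, Lamp.mul_h, Prod.snd_mul, toAdd_mul] at h2
          simp only [Bd, Finset.mem_union, Finset.mem_Ioc, Finset.mem_Ico]
          omega
      refine (Finset.card_le_card hsub).trans (Finset.card_image_le.trans ?_)
      rw [Finset.card_product, Finset.card_product, Finset.card_map, Finset.card_univ]
      gcongr
    have hlim : Tendsto (fun n : ℕ => (2 * z : ℝ) / (2 * n + 1)) atTop (𝓝 0) := by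
      refine Tendsto.div_atTop tendsto_const_nhds ?_
      refine tendsto_atTop_add_const_right _ _ ?_
      exact (tendsto_natCast_atTop_atTop (R := ℝ)).const_mul_atTop (by norm_num)
    refine squeeze_zero' (Eventually.of_forall fun n => by positivity) ?_ hlim
    filter_upwards [eventually_ge_atTop r] with n hn
    rw [cardF]
    have h1 : ((((F n).filter (fun x => x * g ∉ F n)).card : ℕ) : ℝ) ≤
        (Q n).card * (Fintype.card K * (2 * z)) := by exact_mod_cast hbound n hn
    have h2 : (0 : ℝ) < (Q n).card := by exact_mod_cast hQ n
    have h3 : (0 : ℝ) < Fintype.card K := by exact_mod_cast Fintype.card_pos (α := K)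
    have h4 : (0 : ℝ) < 2 * n + 1 := by positivity
    push_cast
    rw [div_le_div_iff₀ (by positivity) h4]
    nlinarith [mul_le_mul_of_nonneg_right h1 h4.le]

end

lemma ball_finite {m : ℕ} {G : Type*} [Group G] (σ : Fin m → G) (n : ℕ) : (ball σ n).Finite :=
  ((List.finite_length_le (Fin m × Bool) n).image (wordEval σ)).subset
    fun _ ⟨w, hw, h⟩ => ⟨w, hw, h⟩

lemma ball_card_le {m : ℕ} {G : Type*} [Group G] (σ : Fin m → G) (n : ℕ) :
    (ball σ n).ncard ≤ (2 * m + 1) ^ n := by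
  classical
  induction n with
  | zero =>
    have : ball σ 0 ⊆ {1} := by
      rintro g ⟨w, hw, rfl⟩
      simp at hw
      simp [hw, wordEval_nil]
    simpa using Set.ncard_le_ncard this
  | succ n ih =>
    let f : Option (Fin m × Bool) × G → G := fun p => (p.1.elim 1 (fun x => letterVal σ x)) * p.2
    have hsub : ball σ (n + 1) ⊆ f '' (Set.univ ×ˢ ball σ n) := by
      rintro g ⟨w, hw, rfl⟩
      cases w with
      | nil => exact ⟨(none, 1), ⟨trivial, [], by simp, wordEval_nil _⟩, by simp [f, wordEval_nil]⟩
      | cons x w =>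
        refine ⟨(some x, wordEval σ w), ⟨trivial, w, by simpa using hw, rfl⟩, ?_⟩
        simp [f, wordEval_cons, letterVal]
    have hfin : (Set.univ ×ˢ ball σ n : Set (Option (Fin m × Bool) × G)).Finite :=
      Set.finite_univ.prod (ball_finite σ n)
    calc (ball σ (n + 1)).ncard ≤ (f '' (Set.univ ×ˢ ball σ n)).ncard :=
          Set.ncard_le_ncard hsub (hfin.image f)
      _ ≤ (Set.univ ×ˢ ball σ n : Set (Option (Fin m × Bool) × G)).ncard :=
          Set.ncard_image_le hfin
      _ = (2 * m + 1) * (ball σ n).ncard := by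
          rw [Set.ncard_prod, Set.ncard_univ]
          simp [mul_comm]
      _ ≤ (2 * m + 1) * (2 * m + 1) ^ n := Nat.mul_le_mul_left _ ih
      _ = _ := by ring

lemma le_growthRate {m : ℕ} {G : Type} [Group G] (σ : Fin m → G) (L N : ℕ) (hL : 1 ≤ L)
    (hN : ∀ k, N ^ k ≤ (ball σ (k * L)).ncard) (x : ℝ) (hx : 0 ≤ x) (hxN : x ^ L ≤ N) :
    x ≤ growthRate σ := by
  unfold growthRate
  apply le_limsup_of_frequently_le
  · rw [Filter.frequently_atTop]
    intro k
    refine ⟨(k + 1) * L, by nlinarith, ?_⟩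
    have hpos : ((k + 1) * L) ≠ 0 := by positivity
    have h1 : x ^ ((k + 1) * L) ≤ ((ball σ ((k + 1) * L)).ncard : ℝ) := by
      calc x ^ ((k + 1) * L) = (x ^ L) ^ (k + 1) := by rw [← pow_mul]; ring_nf
        _ ≤ (N : ℝ) ^ (k + 1) := by gcongr
        _ ≤ _ := by exact_mod_cast hN (k + 1)
    calc x = (x ^ ((k + 1) * L)) ^ (1 / (((k + 1) * L : ℕ) : ℝ)) := by
          rw [one_div, Real.pow_rpow_inv_natCast hx hpos]
      _ ≤ _ := Real.rpow_le_rpow (by positivity) h1 (by positivity)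
  · refine ⟨2 * m + 1, ?_⟩
    rw [Filter.eventually_map]
    filter_upwards [eventually_ge_atTop 1] with n hn
    have h1 : ((ball σ n).ncard : ℝ) ≤ (2 * m + 1) ^ n := by exact_mod_cast ball_card_le σ n
    calc ((ball σ n).ncard : ℝ) ^ (1 / (n : ℝ)) ≤ ((2 * m + 1 : ℝ) ^ n) ^ (1 / (n : ℝ)) :=
          Real.rpow_le_rpow (by positivity) h1 (by positivity)
      _ = 2 * m + 1 := by
          rw [one_div, Real.pow_rpow_inv_natCast (by positivity) (by omega)]

lemma wordEval_pair {m : ℕ} {K : Type} [Group K] (π : Fin m → K) (w : List (Fin m × Bool)) :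
    wordEval (fun i => (π i, Multiplicative.ofAdd (1 : ℤ))) w =
      (wordEval π w, Multiplicative.ofAdd (wordHt w)) := by
  induction w with
  | nil => rw [wordEval_nil, wordEval_nil]; rfl
  | cons x w ih =>
    rw [wordEval_cons, wordEval_cons, wordHt_cons, ih]
    rcases x with ⟨i, b⟩
    cases b <;> simp [ofAdd_add]

lemma exists_amenable (m : ℕ) (hm : 2 ≤ m) (ε : ℝ) (hε : 0 < ε) :
    ∃ (G : Type) (instG : Group G) (σ : Fin m → G),
        @IsAmenableWithLargeGrowth m ε G instG σ := by
  classical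
  set a : ℝ := 2 * (m : ℝ) - 1 with ha
  have hm' : (2 : ℝ) ≤ m := by exact_mod_cast hm
  have ha3 : 3 ≤ a := by rw [ha]; linarith
  let x : ℝ := max (a - ε) 1
  have hx1 : 1 ≤ x := le_max_right _ _
  have hxa : x < a := max_lt (by linarith) (by linarith)
  obtain ⟨l, hl⟩ : ∃ l : ℕ, 2 * x ^ (l + 5) ≤ a ^ l := by
    have h1 : x / a < 1 := by rw [div_lt_one (by linarith)]; exact hxa
    obtain ⟨l, hl⟩ := exists_pow_lt_of_lt_one (y := x / a) (x := 1 / (2 * x ^ 5))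
      (by positivity) h1
    refine ⟨l, ?_⟩
    rw [div_pow, div_lt_div_iff₀ (by positivity) (by positivity)] at hl
    rw [pow_add]
    linarith
  obtain ⟨c, S, hS, hcard⟩ := exists_blocks m hm l
  set L := l + 5 with hLdef
  have hL : 1 ≤ L := by omega
  obtain ⟨V, _, _, π, hπ⟩ := exists_perm m (2 * (L * L + L))
  let H := Equiv.Perm V × Multiplicative ℤ
  let η : Fin m → H := fun i => (π i, Multiplicative.ofAdd (1 : ℤ))
  let τ : Fin m → Lamp H (Fin m) := lampGen η
  let G := Subgroup.closure (Set.range τ)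
  let σ : Fin m → G := fun i => ⟨τ i, Subgroup.subset_closure ⟨i, rfl⟩⟩
  refine ⟨G, inferInstance, σ, ?_, ?_, ?_⟩
  · have h1 : Set.range σ = ((↑) : G → Lamp H (Fin m)) ⁻¹' Set.range τ := by
      ext g
      simp only [Set.mem_range, Set.mem_preimage]
      exact exists_congr fun i => Subtype.ext_iff
    rw [h1]
    exact Subgroup.closure_closure_coe_preimage
  · exact amenable_subgroup lamp_amenable _
  · refine (le_max_left _ _).trans (le_growthRate σ L S.card hL ?_ x (by linarith) ?_)
    · intro k
      obtain ⟨T, hT, hw⟩ := exists_good_words L hL c S hS k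
      have hSA : ∀ w ∈ T, SelfAvoid η w := by
        intro w hwT u hu hne h
        obtain ⟨h1, h2, -, -, h5⟩ := hw w hwT
        have h6 := h5 u hu
        rw [wordEval_pair, Prod.mk_eq_one] at h
        have hht : wordHt u = 0 := h.2
        rw [hht] at h6
        refine hπ u ?_ ?_ hne h.1
        · zify
          linarith
        · unfold FreeGroup.IsReduced at *
          exact h2.infix hu
      rw [← hT, ← Finset.card_image_of_injOn (s := T) (f := wordEval σ), ← Set.ncard_coe_finset]
      · refine Set.ncard_le_ncard ?_ (ball_finite σ _)
        intro g hg
        simp only [Finset.coe_image, Set.mem_image, Finset.mem_coe] at hg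
        obtain ⟨w, hwT, rfl⟩ := hg
        exact ⟨w, (hw w hwT).1.le, rfl⟩
      · intro w hwT w' hwT' h
        refine lamp_inj η w w' (hSA w hwT) (hSA w' hwT') ?_
        have h1 := congrArg (Subgroup.subtype G) h
        rw [map_wordEval, map_wordEval] at h1
        exact h1
    · have h1 : ((2 * m - 1 : ℕ) : ℝ) = a := by
        rw [Nat.cast_sub (by omega)]; push_cast; rfl
      have h2 : a ^ l ≤ 2 * (S.card : ℝ) := by
        rw [← h1]; exact_mod_cast hcard
      linarith

/-- For every `m ≥ 2` and `ε > 0` there is an amenable group `G`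
generated by a set of `m` elements with growth rate `ω(G, A) ≥ 2m - 1 - ε`.
Consequently there is no constant `c_m` with `1 < c_m < 2m - 1` such that every
`m`-generated group with growth rate at least `c_m` is non-amenable: this answers
de la Harpe's question in the negative. -/
theorem amenable_with_large_growth_exists (m : ℕ) (hm : 2 ≤ m) (ε : ℝ) (hε : 0 < ε) :
    (∃ (G : Type) (instG : Group G) (σ : Fin m → G),
        @IsAmenableWithLargeGrowth m ε G instG σ) ∧
      ¬ ∃ c : ℝ, 1 < c ∧ c < 2 * (m : ℝ) - 1 ∧
        ∀ (G : Type) (instG : Group G) (σ : Fin m → G),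
          @Subgroup.closure G instG (Set.range σ) = ⊤ →
          c ≤ @growthRate m G instG σ → ¬ @IsAmenable G instG := by
  refine ⟨exists_amenable m hm ε hε, ?_⟩
  rintro ⟨c, _, hc, h⟩
  obtain ⟨G, instG, σ, h1, h2, h3⟩ := exists_amenable m hm (2 * (m : ℝ) - 1 - c) (by linarith)
  exact h G instG σ h1 (by linarith) h2
end

section
/- For every m ≥ 1 and every ε > 0, there exists an m-generated group G (with generating set A of size m) which is an extension of an abelian group by a nilpotent group (hence amenable), such that the growth rate of G satisfies ω(G,A) ≥ 2m - 1 - ε. -/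
open Filter Topology

/-- `G` is an extension of an abelian group by a nilpotent group: it has an abelian
normal subgroup `N` such that `G/N` is nilpotent. -/
def IsAbelianByNilpotent (G : Type*) [Group G] : Prop :=
  ∃ N : Subgroup G, N.Normal ∧ (∀ x ∈ N, ∀ y ∈ N, x * y = y * x) ∧
    ∀ [N.Normal], Group.IsNilpotent (G ⧸ N)

/-- `G` is generated by the `m` elements `σ 0, …, σ (m-1)`, is abelian-by-nilpotent
(hence amenable), and has growth rate at least `2m - 1 - ε` w.r.t. these generators. -/
def IsAbelianByNilpotentWithLargeGrowth (m : ℕ) (ε : ℝ) (G : Type) [Group G]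
    (σ : Fin m → G) : Prop :=
  Subgroup.closure (Set.range σ) = ⊤ ∧ IsAbelianByNilpotent G ∧ IsAmenable G ∧
    2 * (m : ℝ) - 1 - ε ≤ growthRate σ


section Amen

/-- A compact convex set of bounded functions, invariant under a reparametrisation,
contains a fixed point (one-map Markov-Kakutani). -/
lemma mk_single {I : Type*} (K : Set (I → ℝ)) (hK : IsCompact K) (hne : K.Nonempty)
    (hconv : Convex ℝ K) (hb : ∀ x ∈ K, ∀ i, 0 ≤ x i ∧ x i ≤ 1)
    (τ : I → I) (hτ : ∀ x ∈ K, x ∘ τ ∈ K) : ∃ x ∈ K, x ∘ τ = x := by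
  let C : ℕ → Set (I → ℝ) := fun n => K ∩ {x | ∀ i, |x (τ i) - x i| ≤ 1 / ((n : ℝ) + 1)}
  have hclosed : ∀ n : ℕ, IsClosed {x : I → ℝ | ∀ i, |x (τ i) - x i| ≤ 1 / ((n : ℝ) + 1)} := by
    intro n
    simp only [Set.ofPred_forall]
    refine isClosed_iInter fun i => ?_
    exact isClosed_le (by fun_prop) continuous_const
  have hKc : IsClosed K := hK.isClosed
  obtain ⟨x₀, hx₀⟩ := hne
  have hit : ∀ k, x₀ ∘ τ^[k] ∈ K := by
    intro k
    induction k with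
    | zero => simpa using hx₀
    | succ k ih => exact hτ _ ih
  have hnon : ∀ n, (C n).Nonempty := by
    intro n
    have hpos : (0 : ℝ) < (n : ℝ) + 1 := by positivity
    refine ⟨∑ k ∈ Finset.range (n + 1), (1 / ((n : ℝ) + 1)) • (x₀ ∘ τ^[k]), ?_, ?_⟩
    · refine hconv.sum_mem (fun _ _ => by positivity) ?_ (fun k _ => hit k)
      simp
      field_simp
    · intro i
      simp only [Finset.sum_apply, Pi.smul_apply, smul_eq_mul, Function.comp_apply]
      rw [← Finset.sum_sub_distrib]
      have : ∑ k ∈ Finset.range (n + 1), (1 / ((n : ℝ) + 1) * x₀ (τ^[k] (τ i))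
          - 1 / ((n : ℝ) + 1) * x₀ (τ^[k] i))
          = 1 / ((n : ℝ) + 1) * (x₀ (τ^[n + 1] i) - x₀ (τ^[0] i)) := by
        rw [← Finset.sum_range_sub (fun k => x₀ (τ^[k] i)), Finset.mul_sum]
        refine Finset.sum_congr rfl fun k _ => ?_
        rw [Function.iterate_succ_apply]; ring
      rw [this, abs_mul, abs_of_pos (by positivity : (0 : ℝ) < 1 / ((n : ℝ) + 1))]
      have h1 := hb _ (hit (n + 1)) i
      have h0 := hb _ (hit 0) i
      simp only [Function.comp_apply] at h1 h0
      have : |x₀ (τ^[n + 1] i) - x₀ (τ^[0] i)| ≤ 1 := by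
        rw [abs_le]; constructor <;> linarith [h1.1, h1.2, h0.1, h0.2]
      calc _ ≤ 1 / ((n : ℝ) + 1) * 1 := by gcongr
        _ = _ := mul_one _
  have hdec : ∀ n, C (n + 1) ⊆ C n := by
    intro n x hx
    refine ⟨hx.1, fun i => (hx.2 i).trans ?_⟩
    push_cast
    gcongr
    linarith
  obtain ⟨y, hy⟩ := IsCompact.nonempty_iInter_of_sequence_nonempty_isCompact_isClosed C hdec hnon
    (hK.inter_right (hclosed 0)) (fun n => hKc.inter (hclosed n))
  rw [Set.mem_iInter] at hy
  refine ⟨y, (hy 0).1, funext fun i => ?_⟩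
  have hlim : Tendsto (fun n : ℕ => 1 / ((n : ℝ) + 1)) atTop (𝓝 0) :=
    tendsto_one_div_add_atTop_nhds_zero_nat
  have h0 : |y (τ i) - y i| ≤ 0 := ge_of_tendsto' hlim fun n => (hy n).2 i
  have := abs_nonpos_iff.mp h0
  simp only [Function.comp_apply]; linarith

lemma mk_finite {I J : Type*} (τ : J → I → I) (S : Finset J) :
    ∀ (K : Set (I → ℝ)), IsCompact K → K.Nonempty → Convex ℝ K →
      (∀ x ∈ K, ∀ i, 0 ≤ x i ∧ x i ≤ 1) → (∀ j, ∀ x ∈ K, x ∘ τ j ∈ K) →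
      (∀ j k, ∀ x ∈ K, (x ∘ τ j) ∘ τ k = (x ∘ τ k) ∘ τ j) →
      ∃ x ∈ K, ∀ j ∈ S, x ∘ τ j = x := by
  classical
  induction S using Finset.induction_on with
  | empty => intro K _ hne _ _ _ _; obtain ⟨x, hx⟩ := hne; exact ⟨x, hx, by simp⟩
  | insert a S _ ih =>
    intro K hK hne hconv hb hinv hcomm
    obtain ⟨x, hx, hxa⟩ := mk_single K hK hne hconv hb (τ a) (hinv a)
    have hcl : IsClosed {x : I → ℝ | x ∘ τ a = x} := by
      refine isClosed_eq ?_ continuous_id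
      exact continuous_pi fun i => continuous_apply _
    obtain ⟨y, hy, hyS⟩ := ih (K ∩ {x | x ∘ τ a = x}) (hK.inter_right hcl) ⟨x, hx, hxa⟩
      (by
        refine hconv.inter ?_
        intro u hu v hv s t _ _ _
        simp only [Set.mem_ofPred_eq] at *
        funext i
        have h1 := congrFun hu i
        have h2 := congrFun hv i
        simp only [Function.comp_apply, Pi.add_apply, Pi.smul_apply] at *
        rw [h1, h2])
      (fun x hx => hb x hx.1)
      (fun j x hx => ⟨hinv j x hx.1, by
        have h := hx.2
        simp only [Set.mem_ofPred_eq] at *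
        rw [hcomm j a x hx.1, h]⟩)
      (fun j k x hx => hcomm j k x hx.1)
    refine ⟨y, hy.1, fun j hj => ?_⟩
    rcases Finset.mem_insert.mp hj with rfl | h
    · exact hy.2
    · exact hyS j h

lemma mk_all {I J : Type*} (τ : J → I → I) (K : Set (I → ℝ)) (hK : IsCompact K)
    (hne : K.Nonempty) (hconv : Convex ℝ K)
    (hb : ∀ x ∈ K, ∀ i, 0 ≤ x i ∧ x i ≤ 1) (hinv : ∀ j, ∀ x ∈ K, x ∘ τ j ∈ K)
    (hcomm : ∀ j k, ∀ x ∈ K, (x ∘ τ j) ∘ τ k = (x ∘ τ k) ∘ τ j) :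
    ∃ x ∈ K, ∀ j, x ∘ τ j = x := by
  have := hK.inter_iInter_nonempty (fun j => {x : I → ℝ | x ∘ τ j = x})
    (fun j => by
      refine isClosed_eq ?_ continuous_id
      exact continuous_pi fun i => continuous_apply _)
    (fun u => by
      obtain ⟨x, hx, hu⟩ := mk_finite τ u K hK hne hconv hb hinv hcomm
      exact ⟨x, hx, by simpa using hu⟩)
  obtain ⟨x, hx, h⟩ := this
  exact ⟨x, hx, fun j => Set.mem_iInter.mp h j⟩

/-- Finitely additive probability measures on `G` invariant under the subgroup `H`. -/
def invMeas (G : Type*) [Group G] (H : Subgroup G) : Set (Set G → ℝ) :=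
  {μ | (∀ s : Set G, 0 ≤ μ s) ∧ μ Set.univ = 1 ∧
    (∀ s t : Set G, Disjoint s t → μ (s ∪ t) = μ s + μ t) ∧
    (∀ g ∈ H, ∀ s : Set G, μ ((g * ·) '' s) = μ s)}

lemma invMeas_bdd {G : Type*} [Group G] {H : Subgroup G} (μ : Set G → ℝ)
    (h : μ ∈ invMeas G H) (s : Set G) : 0 ≤ μ s ∧ μ s ≤ 1 := by
  refine ⟨h.1 s, ?_⟩
  have h1 := h.2.2.1 s sᶜ disjoint_compl_right
  rw [Set.union_compl_self, h.2.1] at h1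
  linarith [h.1 sᶜ]

lemma invMeas_compact {G : Type*} [Group G] (H : Subgroup G) : IsCompact (invMeas G H) := by
  have hc : IsCompact (Set.pi Set.univ fun _ : Set G => Set.Icc (0 : ℝ) 1) :=
    isCompact_univ_pi fun _ => isCompact_Icc
  refine hc.of_isClosed_subset ?_ (fun μ h s _ => invMeas_bdd μ h s)
  unfold invMeas
  simp only [Set.ofPred_and, Set.ofPred_forall]
  refine IsClosed.inter ?_ (IsClosed.inter ?_ (IsClosed.inter ?_ ?_))
  · exact isClosed_iInter fun s => isClosed_le continuous_const (continuous_apply _)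
  · exact isClosed_eq (continuous_apply _) continuous_const
  · exact isClosed_iInter fun s => isClosed_iInter fun t => isClosed_iInter fun _ =>
      isClosed_eq (continuous_apply _) ((continuous_apply s).add (continuous_apply t))
  · exact isClosed_iInter fun s => isClosed_iInter fun t => isClosed_iInter fun _ =>
      isClosed_eq (continuous_apply _) (continuous_apply _)

lemma invMeas_convex {G : Type*} [Group G] (H : Subgroup G) : Convex ℝ (invMeas G H) := by
  intro u hu v hv a b ha hb hab
  refine ⟨fun s => ?_, ?_, fun s t hst => ?_, fun g hg s => ?_⟩ <;>
    simp only [Pi.add_apply, Pi.smul_apply, smul_eq_mul]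
  · have := hu.1 s; have := hv.1 s; positivity
  · rw [hu.2.1, hv.2.1]; linarith
  · rw [hu.2.2.1 s t hst, hv.2.2.1 s t hst]; ring
  · rw [hu.2.2.2 g hg s, hv.2.2.2 g hg s]

lemma image_mul_mul {G : Type*} [Group G] (g h : G) (s : Set G) :
    (g * ·) '' ((h * ·) '' s) = ((g * h) * ·) '' s := by
  rw [Set.image_image]; simp only [mul_assoc]

lemma invMeas_step {G : Type*} [Group G] (D E : Subgroup G) (hD : D.Normal)
    (hDE : ∀ g ∈ E, ∀ h ∈ E, g * h * g⁻¹ * h⁻¹ ∈ D) (hne : (invMeas G D).Nonempty) :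
    (invMeas G E).Nonempty := by
  obtain ⟨x, hx, hfix⟩ := mk_all (fun (g : E) (s : Set G) => ((g : G) * ·) '' s) (invMeas G D)
    (invMeas_compact D) hne (invMeas_convex D) invMeas_bdd
    (by
      rintro ⟨g, hg⟩ μ ⟨h1, h2, h3, h4⟩
      refine ⟨fun s => h1 _, ?_, fun s t hst => ?_, fun d hd s => ?_⟩
      · simp only [Function.comp_apply]
        rw [Set.image_univ_of_surjective (mul_left_surjective g), h2]
      · simp only [Function.comp_apply]
        rw [Set.image_union, h3]
        exact (Set.disjoint_image_iff (mul_right_injective g)).mpr hst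
      · simp only [Function.comp_apply]
        rw [image_mul_mul]
        have : g * d = (g * d * g⁻¹) * g := by group
        rw [this, ← image_mul_mul, h4 _ (hD.conj_mem d hd g)])
    (by
      rintro ⟨g, hg⟩ ⟨h, hh⟩ μ ⟨h1, h2, h3, h4⟩
      funext s
      simp only [Function.comp_apply]
      rw [image_mul_mul, image_mul_mul]
      have : g * h = (g * h * g⁻¹ * h⁻¹) * (h * g) := by group
      rw [this, ← image_mul_mul, h4 _ (hDE g hg h hh)])
  refine ⟨x, hx.1, hx.2.1, hx.2.2.1, fun g hg s => ?_⟩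
  exact congrFun (hfix ⟨g, hg⟩) s

lemma amenable_of_solvable (G : Type*) [Group G] [h : Group.IsSolvable G] : IsAmenable G := by
  classical
  obtain ⟨n, hn⟩ := h.solvable
  have key : ∀ k, k ≤ n → (invMeas G (derivedSeries G (n - k))).Nonempty := by
    intro k
    induction k with
    | zero =>
      intro _
      rw [Nat.sub_zero, hn]
      refine ⟨fun s => if (1 : G) ∈ s then 1 else 0, fun s => by positivity, by simp, ?_, ?_⟩
      · intro s t hst
        have := Set.disjoint_left.mp hst
        by_cases h1 : (1 : G) ∈ s <;> by_cases h2 : (1 : G) ∈ t <;> simp [h1, h2]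
        exact this h1 h2
      · intro g hg s
        rw [Subgroup.mem_bot] at hg
        subst hg
        simp
    | succ k ih =>
      intro hk
      refine invMeas_step _ _ (derivedSeries_normal G (n - k)) ?_ (ih (by omega))
      intro g hg h hh
      have : n - k = (n - (k + 1)) + 1 := by omega
      rw [this, derivedSeries_succ]
      exact Subgroup.commutator_mem_commutator hg hh
  obtain ⟨μ, h1, h2, h3, h4⟩ := key n le_rfl
  refine ⟨μ, h1, h2, h3, fun g s => h4 g ?_ s⟩
  rw [Nat.sub_self, derivedSeries_zero]; trivial

lemma solvable_of_abNil (G : Type*) [Group G] (h : IsAbelianByNilpotent G) :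
    Group.IsSolvable G := by
  obtain ⟨N, hN, hab, hnil⟩ := h
  have := @hnil hN
  rw [Group.isSolvable_iff_subgroup_quotient N]
  refine ⟨Group.isSolvable_of_comm fun a b => Subtype.ext (hab a a.2 b b.2), inferInstance⟩

lemma amenable_of_abNil (G : Type*) [Group G] (h : IsAbelianByNilpotent G) :
    IsAmenable G := by
  have := solvable_of_abNil G h
  exact amenable_of_solvable G

end Amen

section Nil

/-- The triangular transformation solving `(1 + N_q) v' = (1 + N_p) v`. -/
def trT (p q v : ℕ → ZMod 2) : ℕ → ZMod 2
  | 0 => v 0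
  | s + 1 => v (s + 1) + p s * v s + q s * trT p q v s

lemma z2 (x : ZMod 2) : x + x = 0 := CharTwo.add_self_eq_zero x

lemma trT_trT (p q v : ℕ → ZMod 2) (s : ℕ) : trT q p (trT p q v) s = v s := by
  induction s with
  | zero => rfl
  | succ s ih =>
    rw [trT, ih, trT]
    linear_combination z2 (p s * v s) + z2 (q s * trT p q v s)

lemma trT_local (p q v w : ℕ → ZMod 2) (s : ℕ) (h : ∀ t ≤ s, v t = w t) :
    trT p q v s = trT p q w s := by
  induction s with
  | zero => exact h 0 le_rfl
  | succ s ih =>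
    rw [trT, trT, ih fun t ht => h t (by omega), h s (by omega), h (s + 1) le_rfl]

lemma trT_triangular (p q v w : ℕ → ZMod 2) (s : ℕ) (h : ∀ t < s, v t = w t) :
    trT p q v s - v s = trT p q w s - w s := by
  cases s with
  | zero => simp [trT]
  | succ s =>
    rw [trT, trT, trT_local p q v w s fun t ht => h t (by omega), h s (by omega)]
    ring

lemma trT_step (p q v : ℕ → ZMod 2) (j : ℕ) (hv : v j = 1) (hv0 : ∀ t, j < t → v t = 0)
    (hp : p j = 1) (hq : q j = 0) (hq' : q (j + 1) = 0) :
    trT p q v (j + 1) = 1 ∧ ∀ t, j + 1 < t → trT p q v t = 0 := by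
  refine ⟨by rw [trT, hv, hp, hq, hv0 (j + 1) (by omega)]; ring, ?_⟩
  have : ∀ d, trT p q v (j + 2 + d) = 0 := by
    intro d
    induction d with
    | zero =>
      rw [Nat.add_zero, trT, hv0 (j + 1) (by omega), hv0 (j + 1 + 1) (by omega), hq']; ring
    | succ d ih =>
      rw [← Nat.add_assoc, trT, ih, hv0 (j + 2 + d) (by omega), hv0 (j + 2 + d + 1) (by omega)]
      ring
  intro t ht
  obtain ⟨d, rfl⟩ := Nat.exists_eq_add_of_le (show j + 2 ≤ t by omega)
  exact this d

/-- Extension by zero. -/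
def extZ {n : ℕ} (v : Fin n → ZMod 2) : ℕ → ZMod 2 :=
  fun s => if h : s < n then v ⟨s, h⟩ else 0

lemma extZ_of_lt {n : ℕ} (v : Fin n → ZMod 2) (s : Fin n) : extZ v s = v s := by
  simp [extZ]

lemma perm_aux {n : ℕ} (p q : ℕ → ZMod 2) (v : Fin n → ZMod 2) :
    (fun s : Fin n => trT q p (extZ (fun s : Fin n => trT p q (extZ v) s)) s) = v := by
  funext s
  rw [trT_local q p _ (trT p q (extZ v)) s, trT_trT, extZ_of_lt]
  intro t ht
  have : t < n := lt_of_le_of_lt ht s.2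
  simp [extZ, this]

/-- The permutation of `Fin n → ZMod 2` induced by `trT`. -/
def trPerm (n : ℕ) (p q : ℕ → ZMod 2) : Equiv.Perm (Fin n → ZMod 2) where
  toFun v := fun s => trT p q (extZ v) s
  invFun v := fun s => trT q p (extZ v) s
  left_inv v := perm_aux p q v
  right_inv v := perm_aux q p v

lemma tri_agree {n : ℕ} {f : (Fin n → ZMod 2) → (Fin n → ZMod 2)}
    (h : ∀ (j : Fin n) (v w : Fin n → ZMod 2), (∀ t < j, v t = w t) → f v j - v j = f w j - w j)
    (j : Fin n) (v w : Fin n → ZMod 2) (hvw : ∀ t < j, v t = w t) :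
    ∀ t < j, f v t = f w t := by
  intro t ht
  have h1 := h t v w fun u hu => hvw u (hu.trans ht)
  rw [hvw t ht] at h1
  exact sub_left_injective h1

/-- Triangular permutations of `Fin n → ZMod 2`. -/
def triGroup (n : ℕ) : Subgroup (Equiv.Perm (Fin n → ZMod 2)) where
  carrier := {π | ∀ (j : Fin n) (v w : Fin n → ZMod 2), (∀ t < j, v t = w t) →
    π v j - v j = π w j - w j}
  one_mem' := by intro j v w _; simp
  mul_mem' := by
    intro a b ha hb j v w h
    have h1 := ha j (b v) (b w) (tri_agree hb j v w h)
    have h2 := hb j v w h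
    rw [Equiv.Perm.mul_apply, Equiv.Perm.mul_apply]
    linear_combination h1 + h2
  inv_mem' := by
    intro a ha j v w h
    have hself : ∀ x, a ((a⁻¹) x) = x := fun x => a.apply_symm_apply x
    have h1 : ∀ t : ℕ, ∀ ht : t < n, (⟨t, ht⟩ : Fin n) < j →
        (a⁻¹) v ⟨t, ht⟩ = (a⁻¹) w ⟨t, ht⟩ := by
      intro t
      induction t using Nat.strong_induction_on with
      | _ t ih =>
        intro ht htj
        have h2 := ha ⟨t, ht⟩ ((a⁻¹) v) ((a⁻¹) w) (fun u hu => ih u hu u.2 (hu.trans htj))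
        rw [hself, hself, h _ htj] at h2
        exact sub_right_injective h2
    have h2 := ha j ((a⁻¹) v) ((a⁻¹) w) (fun t ht => h1 t t.2 ht)
    rw [hself, hself] at h2
    linear_combination -h2

lemma triGroup_pow {n : ℕ} (π : Equiv.Perm (Fin n → ZMod 2)) (hπ : π ∈ triGroup n) (k : ℕ) :
    ∀ v, ∀ t : Fin n, (t : ℕ) < k → (π ^ 2 ^ k) v t = v t := by
  induction k with
  | zero => intro v t ht; omega
  | succ k ih =>
    intro v t ht
    rw [pow_succ, pow_mul, sq, Equiv.Perm.mul_apply]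
    by_cases htk : (t : ℕ) < k
    · rw [ih _ t htk, ih _ t htk]
    · have htk' : (t : ℕ) = k := by omega
      have h1 := (triGroup n).pow_mem hπ (2 ^ k) t ((π ^ 2 ^ k) v) v
        (fun u hu => ih v u (by have : (u : ℕ) < t := hu; omega))
      linear_combination h1 + z2 ((π ^ 2 ^ k) v t) - z2 (v t)

lemma triGroup_nilpotent (n : ℕ) : Group.IsNilpotent (triGroup n) := by
  have : IsPGroup 2 (triGroup n) := by
    rintro ⟨π, hπ⟩
    refine ⟨n, Subtype.ext ?_⟩
    rw [SubmonoidClass.coe_pow, OneMemClass.coe_one]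
    ext v t
    rw [triGroup_pow π hπ n v t t.2]; rfl
  exact IsPGroup.isNilpotent this

lemma trPerm_mem (n : ℕ) (p q : ℕ → ZMod 2) : trPerm n p q ∈ triGroup n := by
  intro j v w h
  have h1 := trT_triangular p q (extZ v) (extZ w) j (by
    intro t ht
    have htn : t < n := ht.trans j.2
    simp only [extZ, htn, dif_pos]
    exact h _ ht)
  rw [extZ_of_lt, extZ_of_lt] at h1
  exact h1

lemma wordEval_append {m : ℕ} {G : Type*} [Group G] (σ : Fin m → G)
    (u w : List (Fin m × Bool)) :
    wordEval σ (u ++ w) = wordEval σ u * wordEval σ w := by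
  simp [wordEval]

lemma wordEval_map {m : ℕ} {G H : Type*} [Group G] [Group H] (f : G →* H) (σ : Fin m → G)
    (w : List (Fin m × Bool)) :
    f (wordEval σ w) = wordEval (fun i => f (σ i)) w := by
  induction w with
  | nil => simp [wordEval]
  | cons x w ih =>
    rw [wordEval_cons, wordEval_cons, map_mul, ih]
    split_ifs <;> simp

/-- Indicator that the letter at position `s` of `l` is `x`. -/
def indAt {m : ℕ} (l : List (Fin m × Bool)) (x : Fin m × Bool) (s : ℕ) : ZMod 2 :=
  if l[s]? = some x then 1 else 0

lemma resid_aux {m : ℕ} (l : List (Fin m × Bool))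
    (hl : ∀ j (h : j + 1 < l.length), ∀ i b, l[j] = (i, b) → l[j + 1] ≠ (i, !b)) :
    wordEval (fun i => trPerm (l.length + 1) (indAt l (i, true)) (indAt l (i, false))) l.reverse
      (fun s => if (s : ℕ) = 0 then 1 else 0) ⟨l.length, by omega⟩ = 1 := by
  set σ : Fin m → Equiv.Perm (Fin (l.length + 1) → ZMod 2) :=
    fun i => trPerm (l.length + 1) (indAt l (i, true)) (indAt l (i, false)) with hσ
  have key : ∀ j, ∀ hj : j ≤ l.length,
      let v := wordEval σ (l.take j).reverse (fun s => if (s : ℕ) = 0 then 1 else 0)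
      extZ v j = 1 ∧ ∀ t, j < t → extZ v t = 0 := by
    intro j
    induction j with
    | zero =>
      intro _
      simp only [List.take_zero, List.reverse_nil]
      refine ⟨by simp [wordEval, extZ], fun t ht => ?_⟩
      by_cases h : t < l.length + 1
      · simp [wordEval, extZ, h]; omega
      · simp [extZ, h]
    | succ j ih =>
      intro hj
      obtain ⟨h1, h2⟩ := ih (by omega)
      have hjl : j < l.length := by omega
      rw [List.take_succ_eq_append_getElem hjl, List.reverse_append, List.reverse_singleton,
        List.singleton_append, wordEval_cons]
      set v := wordEval σ (l.take j).reverse (fun s => if (s : ℕ) = 0 then 1 else 0) with hv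
      rcases hx : l[j] with ⟨i, b⟩
      have hlet : (if b then σ i else (σ i)⁻¹) =
          trPerm (l.length + 1) (indAt l (i, b)) (indAt l (i, !b)) := by
        cases b
        · rfl
        · rfl
      simp only [Equiv.Perm.mul_apply]
      rw [hlet]
      obtain ⟨g1, g2⟩ := trT_step (indAt l (i, b)) (indAt l (i, !b)) (extZ v) j h1 h2
        (by simp [indAt, hjl, hx]) (by simp [indAt, hjl, hx])
        (by
          by_cases h : j + 1 < l.length
          · have := hl j h i b hx
            simp [indAt, h, this]
          · simp [indAt, List.getElem?_eq_none (show l.length ≤ j + 1 by omega)])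
      refine ⟨?_, fun t ht => ?_⟩
      · refine Eq.trans ?_ g1
        exact extZ_of_lt (trPerm (l.length + 1) (indAt l (i, b)) (indAt l (i, !b)) v)
          ⟨j + 1, by omega⟩
      · by_cases h : t < l.length + 1
        · refine Eq.trans ?_ (g2 t ht)
          exact extZ_of_lt (trPerm (l.length + 1) (indAt l (i, b)) (indAt l (i, !b)) v) ⟨t, h⟩
        · simp [extZ, h]
  have := (key l.length le_rfl).1
  rw [List.take_length] at this
  refine Eq.trans ?_ this
  exact (extZ_of_lt _ (⟨l.length, by omega⟩ : Fin (l.length + 1))).symm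

/-- Free groups are residually nilpotent. -/
lemma resid {m : ℕ} (w : List (Fin m × Bool)) (hw : FreeGroup.IsReduced w) (hne : w ≠ []) :
    ∃ (P : Type) (_ : Group P) (_ : Group.IsNilpotent P) (σ : Fin m → P), wordEval σ w ≠ 1 := by
  have h := resid_aux w.reverse (by
    have h1 : w.reverse.IsChain (fun a b => b.1 = a.1 → b.2 = a.2) := by
      rw [List.isChain_reverse]; exact hw
    intro j hj i b h2 h3
    have h4 := List.isChain_iff_getElem.mp h1 j hj
    rw [h2, h3] at h4
    simp at h4)
  refine ⟨triGroup (w.reverse.length + 1), inferInstance, triGroup_nilpotent _,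
    fun i => ⟨trPerm _ (indAt w.reverse (i, true)) (indAt w.reverse (i, false)),
      trPerm_mem _ _ _⟩, fun h1 => ?_⟩
  have h2 := congrArg (triGroup (w.reverse.length + 1)).subtype h1
  rw [wordEval_map, map_one] at h2
  simp only [Subgroup.subtype_apply] at h2
  rw [List.reverse_reverse, h2] at h
  simp at h
  exact hne h

lemma wordEval_eq_lift {m : ℕ} {G : Type*} [Group G] (σ : Fin m → G)
    (w : List (Fin m × Bool)) : wordEval σ w = FreeGroup.lift σ (FreeGroup.mk w) := by
  rw [FreeGroup.lift_mk, wordEval]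
  congr 1
  refine List.map_congr_left fun x _ => ?_
  cases x.2 <;> rfl

lemma resid2 {m : ℕ} (u v : List (Fin m × Bool)) :
    ∃ (P : Type) (_ : Group P) (_ : Group.IsNilpotent P) (σ : Fin m → P),
      (FreeGroup.IsReduced u → FreeGroup.IsReduced v → wordEval σ u = wordEval σ v → u = v) := by
  by_cases huv : FreeGroup.IsReduced u ∧ FreeGroup.IsReduced v ∧ u ≠ v
  swap
  · refine ⟨Unit, inferInstance, inferInstance, fun _ => 1, fun h1 h2 _ => ?_⟩
    by_contra h
    exact huv ⟨h1, h2, h⟩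
  obtain ⟨hu, hv, huv⟩ := huv
  have hg : (FreeGroup.mk u)⁻¹ * FreeGroup.mk v ≠ 1 := by
    intro h
    rw [inv_mul_eq_one] at h
    have := congrArg FreeGroup.toWord h
    rw [FreeGroup.toWord_mk, FreeGroup.toWord_mk, hu.reduce_eq, hv.reduce_eq] at this
    exact huv this
  obtain ⟨P, i1, i2, σ, hσ⟩ := resid ((FreeGroup.mk u)⁻¹ * FreeGroup.mk v).toWord
    FreeGroup.isReduced_toWord (by rwa [Ne, FreeGroup.toWord_eq_nil_iff])
  refine ⟨P, i1, i2, σ, fun _ _ h => absurd ?_ hσ⟩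
  rw [wordEval_eq_lift, FreeGroup.mk_toWord, map_mul, map_inv, ← wordEval_eq_lift,
    ← wordEval_eq_lift, h, inv_mul_cancel]

/-- A finite set of reduced words embeds in a nilpotent group. -/
lemma resid_finset {m : ℕ} (S : Finset (List (Fin m × Bool)))
    (hS : ∀ u ∈ S, FreeGroup.IsReduced u) :
    ∃ (P : Type) (_ : Group P) (_ : Group.IsNilpotent P) (σ : Fin m → P),
      ∀ u ∈ S, ∀ v ∈ S, wordEval σ u = wordEval σ v → u = v := by
  choose P i1 i2 σ hσ using fun uv : S × S => resid2 uv.1.1 uv.2.1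
  refine ⟨∀ uv : S × S, P uv, inferInstance, inferInstance, fun i uv => σ uv i, ?_⟩
  intro u hu v hv h
  refine hσ (⟨u, hu⟩, ⟨v, hv⟩) (hS u hu) (hS v hv) ?_
  have h1 := congrArg (Pi.evalMonoidHom P (⟨u, hu⟩, ⟨v, hv⟩)) h
  rw [wordEval_map, wordEval_map] at h1
  exact h1

end Nil

section Growth

lemma ball_finite_card {m : ℕ} {G : Type*} [Group G] (σ : Fin m → G) (n : ℕ) :
    (ball σ n).Finite ∧ (ball σ n).ncard ≤ (2 * m + 1) ^ n := by
  classical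
  let f : (Fin n → Option (Fin m × Bool)) → G :=
    fun c => ((List.ofFn c).map fun o => o.elim 1 fun ℓ => if ℓ.2 then σ ℓ.1 else (σ ℓ.1)⁻¹).prod
  have hsub : ball σ n ⊆ f '' Set.univ := by
    rintro g ⟨w, hw, rfl⟩
    refine ⟨fun i => w[(i : ℕ)]?, trivial, ?_⟩
    have hl : List.ofFn (fun i : Fin n => w[(i : ℕ)]?) =
        w.map some ++ List.replicate (n - w.length) none := by
      apply List.ext_getElem
      · simp; omega
      · intro i h1 h2
        simp only [List.getElem_ofFn]
        by_cases h : i < w.length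
        · simp [List.getElem_append, h]
        · simp [List.getElem_append, h]
    simp only [f]
    rw [hl]
    simp [wordEval, Function.comp_def]
  have hfin : (f '' Set.univ).Finite := Set.toFinite _
  refine ⟨hfin.subset hsub, (Set.ncard_le_ncard hsub hfin).trans ?_⟩
  refine (Set.ncard_image_le (Set.toFinite _)).trans ?_
  rw [Set.ncard_univ, Nat.card_eq_fintype_card]
  simp [mul_comm]

lemma growth_lower {m : ℕ} {G : Type*} [Group G] (σ : Fin m → G) (L s : ℕ) (hL : 0 < L)
    (hE : ∀ j, ∃ E : Finset (List (Fin m × Bool)), E.card = s ^ j ∧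
      (∀ e ∈ E, e.length = j * L) ∧ Set.InjOn (wordEval σ) E)
    (r : ℝ) (hr : 0 ≤ r) (hrs : r ^ L ≤ s) : r ≤ growthRate σ := by
  unfold growthRate
  refine Filter.le_limsup_of_frequently_le ?_ ?_
  · refine Filter.frequently_atTop.mpr fun a => ⟨(a + 1) * L, by nlinarith, ?_⟩
    obtain ⟨E, hc, hlen, hinj⟩ := hE (a + 1)
    have hb := ball_finite_card σ ((a + 1) * L)
    have h1 : s ^ (a + 1) ≤ (ball σ ((a + 1) * L)).ncard := by
      rw [← hc, ← Set.ncard_coe_finset E, ← Set.InjOn.ncard_image hinj]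
      refine Set.ncard_le_ncard ?_ hb.1
      rintro _ ⟨e, he, rfl⟩
      exact ⟨e, (hlen e he).le, rfl⟩
    have h2 : r ^ ((a + 1) * L) ≤ ((ball σ ((a + 1) * L)).ncard : ℝ) := by
      calc r ^ ((a + 1) * L) = (r ^ L) ^ (a + 1) := by rw [mul_comm, pow_mul]
        _ ≤ (s : ℝ) ^ (a + 1) := by gcongr
        _ ≤ _ := by exact_mod_cast h1
    have hne : (a + 1) * L ≠ 0 := by positivity
    calc r = (r ^ ((a + 1) * L)) ^ (1 / (((a + 1) * L : ℕ) : ℝ)) := by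
            rw [one_div, Real.pow_rpow_inv_natCast hr hne]
      _ ≤ _ := Real.rpow_le_rpow (by positivity) h2 (by positivity)
  · refine Filter.isBoundedUnder_of ⟨2 * (m : ℝ) + 1, fun n => ?_⟩
    have hb := (ball_finite_card σ n).2
    have hb' : ((ball σ n).ncard : ℝ) ≤ (2 * (m : ℝ) + 1) ^ n := by exact_mod_cast hb
    rcases Nat.eq_zero_or_pos n with rfl | hn
    · simp
    · calc _ ≤ ((2 * (m : ℝ) + 1) ^ n) ^ (1 / (n : ℝ)) :=
            Real.rpow_le_rpow (by positivity) hb' (by positivity)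
        _ = _ := by rw [one_div, Real.pow_rpow_inv_natCast (by positivity) hn.ne']

/-- Concatenations of `k` words from `D`. -/
def powW {X : Type*} [DecidableEq X] (D : Finset (List X)) : ℕ → Finset (List X)
  | 0 => {[]}
  | k + 1 => Finset.image₂ (· ++ ·) D (powW D k)

lemma powW_length {X : Type*} [DecidableEq X] (D : Finset (List X)) (Q : ℕ)
    (hD : ∀ d ∈ D, d.length = Q) (k : ℕ) : ∀ c ∈ powW D k, c.length = k * Q := by
  induction k with
  | zero => intro c hc; simp [powW] at hc; simp [hc]
  | succ k ih =>
    intro c hc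
    rw [powW, Finset.mem_image₂] at hc
    obtain ⟨d, hd, c, hc, rfl⟩ := hc
    rw [List.length_append, hD d hd, ih c hc]; ring

lemma card_append {X : Type*} [DecidableEq X] (D C : Finset (List X)) (Q : ℕ)
    (hD : ∀ d ∈ D, d.length = Q) :
    (Finset.image₂ (· ++ ·) D C).card = D.card * C.card := by
  rw [Finset.card_image₂_iff]
  rintro ⟨d, c⟩ h ⟨d', c'⟩ h' heq
  simp only [Set.mem_prod, Finset.mem_coe] at h h'
  simp only at heq
  obtain ⟨h1, h2⟩ := List.append_inj heq (by rw [hD d h.1, hD d' h'.1])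
  rw [h1, h2]

lemma powW_card {X : Type*} [DecidableEq X] (D : Finset (List X)) (Q : ℕ)
    (hD : ∀ d ∈ D, d.length = Q) (k : ℕ) : (powW D k).card = D.card ^ k := by
  induction k with
  | zero => simp [powW]
  | succ k ih => rw [powW, card_append D _ Q hD, ih]; ring

end Growth

section Wreath

variable {n : ℕ}

/-- Level change of a letter. -/
def lev (x : Fin (n + 2) × Bool) : ℤ := if x.1 = 0 then (if x.2 then 1 else -1) else 0

/-- Total level change of a word. -/
def wlev (w : List (Fin (n + 2) × Bool)) : ℤ := (w.map lev).sum

/-- The path of `w` started at level 0 never uses an edge between the levels `k` and `k+1`. -/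
def noCross : List (Fin (n + 2) × Bool) → ℤ → Prop
  | [], _ => True
  | x :: w, k => (x.1 = 0 → k ≠ if x.2 then 0 else -1) ∧ noCross w (k - lev x)

lemma wlev_append (u v : List (Fin (n + 2) × Bool)) : wlev (u ++ v) = wlev u + wlev v := by
  simp [wlev]

lemma wlev_cons (x : Fin (n + 2) × Bool) (v : List (Fin (n + 2) × Bool)) :
    wlev (x :: v) = lev x + wlev v := by
  simp [wlev]

lemma noCross_append (u v : List (Fin (n + 2) × Bool)) (k : ℤ) :
    noCross (u ++ v) k ↔ noCross u k ∧ noCross v (k - wlev u) := by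
  induction u generalizing k with
  | nil => simp [noCross, wlev]
  | cons x u ih =>
    rw [List.cons_append, noCross, noCross, ih, wlev_cons, and_assoc, sub_sub]

variable {P : Type} [Group P] (τ : Fin (n + 2) → P)

/-- Generators of `P × ℤ`. -/
def nuGen (i : Fin (n + 2)) : P × Multiplicative ℤ :=
  (τ i, if i = 0 then Multiplicative.ofAdd 1 else 1)

open Classical in
/-- The lamp at the origin. -/
noncomputable def lamp (x : P × Multiplicative ℤ) : Multiplicative ℤ :=
  if x = 1 then Multiplicative.ofAdd 1 else 1

/-- Generators in the wreath product. -/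
noncomputable def wGen (i : Fin (n + 2)) :
    RegularWreathProduct (Multiplicative ℤ) (P × Multiplicative ℤ) :=
  ⟨if i = 0 then lamp else 1, nuGen τ i⟩

lemma wGen_right (w : List (Fin (n + 2) × Bool)) :
    (wordEval (wGen τ) w).right = wordEval (nuGen τ) w := by
  have := wordEval_map (RegularWreathProduct.rightHom) (wGen τ) w
  exact this

lemma nuGen_fst (w : List (Fin (n + 2) × Bool)) :
    (wordEval (nuGen τ) w).1 = wordEval τ w := by
  have := wordEval_map (MonoidHom.fst P (Multiplicative ℤ)) (nuGen τ) w
  exact this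

lemma nuGen_letter (x : Fin (n + 2) × Bool) :
    (if x.2 then nuGen τ x.1 else (nuGen τ x.1)⁻¹).2 = Multiplicative.ofAdd (lev x) := by
  rcases x with ⟨i, b⟩
  by_cases h : i = 0 <;> cases b <;> simp [nuGen, lev, h]

lemma nuGen_snd (w : List (Fin (n + 2) × Bool)) :
    (wordEval (nuGen τ) w).2 = Multiplicative.ofAdd (wlev w) := by
  induction w with
  | nil => simp [wordEval, wlev]
  | cons x w ih => rw [wordEval_cons, wlev_cons, Prod.snd_mul, ih, nuGen_letter, ofAdd_add]

lemma lamp_of_level {x : P × Multiplicative ℤ} {k : ℤ} (hx : x.2 = Multiplicative.ofAdd k)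
    (hk : k ≠ 0) : lamp x = 1 := by
  rw [lamp, if_neg]
  rintro rfl
  exact hk (Multiplicative.ofAdd.injective hx.symm)

lemma wGen_cons_left (x : Fin (n + 2) × Bool) (w : List (Fin (n + 2) × Bool))
    (y : P × Multiplicative ℤ) :
    (wordEval (wGen τ) (x :: w)).left y = (if x.2 then wGen τ x.1 else (wGen τ x.1)⁻¹).left y *
      (wordEval (wGen τ) w).left ((if x.2 then nuGen τ x.1 else (nuGen τ x.1)⁻¹)⁻¹ * y) := by
  rw [wordEval_cons, RegularWreathProduct.mul_left]
  cases x.2 <;> rfl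

lemma left_one_of_noCross (w : List (Fin (n + 2) × Bool)) :
    ∀ (k : ℤ) (y : P × Multiplicative ℤ), y.2 = Multiplicative.ofAdd k → noCross w k →
      (wordEval (wGen τ) w).left y = 1 := by
  induction w with
  | nil => intro k y _ _; simp [wordEval]
  | cons x w ih =>
    intro k y hy h
    rw [noCross] at h
    rw [wGen_cons_left, ih (k - lev x) _ ?_ h.2, mul_one]
    · rcases x with ⟨i, b⟩
      by_cases hi : i = 0
      · have h1 := h.1 hi
        subst hi
        cases b
        · simp only [Bool.false_eq_true, if_false] at h1 ⊢
          rw [RegularWreathProduct.inv_left]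
          simp only [wGen, if_true, Pi.inv_apply, inv_eq_one]
          refine lamp_of_level (k := 1 + k) ?_ (by omega)
          rw [Prod.snd_mul, hy]; simp [nuGen, ofAdd_add]
        · simp only [if_true] at h1 ⊢
          exact lamp_of_level hy h1
      · cases b <;> simp [wGen, hi]
    · rw [Prod.snd_mul, Prod.snd_inv, nuGen_letter, hy, ← ofAdd_neg, ← ofAdd_add]
      congr 1; ring

lemma left_append (u w : List (Fin (n + 2) × Bool)) (y : P × Multiplicative ℤ) :
    (wordEval (wGen τ) (u ++ w)).left y = (wordEval (wGen τ) u).left y *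
      (wordEval (wGen τ) w).left ((wordEval (nuGen τ) u)⁻¹ * y) := by
  rw [wordEval_append, RegularWreathProduct.mul_left, ← wGen_right]; rfl

/-- The conditions on the building blocks. -/
structure IsBlock (H : ℤ) (u : List (Fin (n + 2) × Bool)) : Prop where
  lev_eq : wlev u = H
  neg : ∀ k, k < 0 → noCross u k
  high : noCross u H
  start : ∃ u', u = (0, true) :: u' ∧ noCross u' (-1)

lemma pow_neg {H : ℤ} (hH : 0 < H) (S : Finset (List (Fin (n + 2) × Bool)))
    (hS : ∀ u ∈ S, IsBlock H u) (j : ℕ) :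
    ∀ e ∈ powW S j, ∀ k, k < 0 → noCross e k := by
  induction j with
  | zero => intro e he k _; simp [powW] at he; simp [he, noCross]
  | succ j ih =>
    intro e he k hk
    rw [powW, Finset.mem_image₂] at he
    obtain ⟨u, hu, f, hf, rfl⟩ := he
    rw [noCross_append]
    exact ⟨(hS u hu).neg k hk, ih f hf _ (by rw [(hS u hu).lev_eq]; omega)⟩

lemma pow_left {H : ℤ} (hH : 0 < H) (S : Finset (List (Fin (n + 2) × Bool)))
    (hS : ∀ u ∈ S, IsBlock H u) (j : ℕ) (e) (he : e ∈ powW S (j + 1))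
    (y : P × Multiplicative ℤ) (hy : y.2 = Multiplicative.ofAdd 0) :
    (wordEval (wGen τ) e).left y = lamp y := by
  rw [powW, Finset.mem_image₂] at he
  obtain ⟨u, hu, f, hf, rfl⟩ := he
  obtain ⟨u', rfl, hu'⟩ := (hS u hu).start
  have hl := (hS _ hu).lev_eq
  rw [wlev_cons] at hl
  have hl0 : lev ((0, true) : Fin (n + 2) × Bool) = 1 := by simp [lev]
  rw [List.cons_append, wGen_cons_left, left_one_of_noCross τ (u' ++ f) (-1), mul_one]
  · simp [wGen]
  · rw [Prod.snd_mul, Prod.snd_inv, nuGen_letter, hy, hl0]; simp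
  · rw [noCross_append]
    exact ⟨hu', pow_neg hH S hS j f hf _ (by omega)⟩

lemma pow_inj {H : ℤ} (hH : 0 < H) (S : Finset (List (Fin (n + 2) × Bool)))
    (hS : ∀ u ∈ S, IsBlock H u)
    (hinj : ∀ u ∈ S, ∀ v ∈ S, wordEval τ u = wordEval τ v → u = v) (j : ℕ) :
    ∀ e ∈ powW S j, ∀ e' ∈ powW S j, wordEval (wGen τ) e = wordEval (wGen τ) e' → e = e' := by
  induction j with
  | zero => intro e he e' he' _; simp [powW] at he he'; rw [he, he']
  | succ j ih =>
    intro e he e' he' heq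
    rw [powW, Finset.mem_image₂] at he he'
    obtain ⟨u, hu, f, hf, rfl⟩ := he
    obtain ⟨u', hu', f', hf', rfl⟩ := he'
    have huu : wordEval (nuGen τ) u = wordEval (nuGen τ) u' := by
      cases j with
      | zero =>
        simp [powW] at hf hf'
        rw [hf, hf', List.append_nil, List.append_nil] at heq
        rw [← wGen_right, ← wGen_right, heq]
      | succ j =>
        set x := wordEval (nuGen τ) u with hx
        have hx2 : x.2 = Multiplicative.ofAdd H := by rw [hx, nuGen_snd, (hS u hu).lev_eq]
        have h1 : (wordEval (wGen τ) (u ++ f)).left x = Multiplicative.ofAdd 1 := by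
          rw [left_append, left_one_of_noCross τ u H x hx2 (hS u hu).high, one_mul, ← hx,
            inv_mul_cancel, pow_left τ hH S hS j f hf 1 rfl, lamp, if_pos rfl]
        rw [heq, left_append, left_one_of_noCross τ u' H x hx2 (hS u' hu').high, one_mul,
          pow_left τ hH S hS j f' hf' _ ?_, lamp] at h1
        · split_ifs at h1 with h2
          · rw [inv_mul_eq_one] at h2
            exact h2.symm
          · exact absurd (Multiplicative.ofAdd.injective h1) (by norm_num)
        · rw [Prod.snd_mul, Prod.snd_inv, hx2, nuGen_snd, (hS u' hu').lev_eq]; simp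
    have h2 : u = u' := hinj u hu u' hu' (by rw [← nuGen_fst τ u, ← nuGen_fst τ u', huu])
    subst h2
    rw [wordEval_append, wordEval_append] at heq
    rw [ih f hf f' hf' (mul_left_cancel heq)]

/-- From a family of blocks to the group. -/
lemma group_of_blocks {H : ℤ} (hH : 0 < H) (S : Finset (List (Fin (n + 2) × Bool)))
    (hS : ∀ u ∈ S, IsBlock H u) (hred : ∀ u ∈ S, FreeGroup.IsReduced u)
    (L : ℕ) (hL : 0 < L) (hlen : ∀ u ∈ S, u.length = L) (r : ℝ) (hr : 0 ≤ r)
    (hrS : r ^ L ≤ S.card) :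
    ∃ (G : Type) (_ : Group G) (σ : Fin (n + 2) → G),
      Subgroup.closure (Set.range σ) = ⊤ ∧ IsAbelianByNilpotent G ∧ r ≤ growthRate σ := by
  obtain ⟨P, i1, i2, τ, hτ⟩ := resid_finset S hred
  let G := Subgroup.closure (Set.range (wGen τ))
  let σ : Fin (n + 2) → G := fun i => ⟨wGen τ i, Subgroup.subset_closure ⟨i, rfl⟩⟩
  refine ⟨G, inferInstance, σ, ?_, ?_, ?_⟩
  · have h1 : Set.range σ = ((↑) : G → _) ⁻¹' Set.range (wGen τ) := by
      ext ⟨x, hx⟩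
      simp [σ, Subtype.ext_iff]
    rw [h1]
    exact Subgroup.closure_closure_coe_preimage
  · let f : G →* P × Multiplicative ℤ := (RegularWreathProduct.rightHom).comp G.subtype
    refine ⟨f.ker, inferInstance, ?_, ?_⟩
    · rintro ⟨x, hx⟩ hx1 ⟨y, hy⟩ hy1
      have hx2 : x.right = 1 := hx1
      have hy2 : y.right = 1 := hy1
      apply Subtype.ext
      change x * y = y * x
      ext z
      · simp [hx2, hy2, mul_comm]
      · simp [hx2, hy2]
      · simp [hx2, hy2]
    · intro _
      exact Group.nilpotent_of_mulEquiv (QuotientGroup.quotientKerEquivRange f).symm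
  · refine growth_lower σ L S.card hL (fun j => ⟨powW S j, powW_card S L hlen j,
      powW_length S L hlen j, ?_⟩) r hr hrS
    intro e he e' he' heq
    refine pow_inj τ hH S hS hτ j e he e' he' ?_
    have := congrArg G.subtype heq
    rw [wordEval_map, wordEval_map] at this
    exact this

end Wreath

section Words

variable {n : ℕ}

/-- Two consecutive letters do not cancel. -/
def okL (x y : Fin (n + 2) × Bool) : Prop := x.1 = y.1 → x.2 = y.2

instance (x y : Fin (n + 2) × Bool) : Decidable (okL x y) := by unfold okL; infer_instance

/-- Reduced words of length `q` which may follow the letter `x`. -/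
def redW : ℕ → Fin (n + 2) × Bool → Finset (List (Fin (n + 2) × Bool))
  | 0, _ => {[]}
  | q + 1, x => (Finset.univ.filter (okL x)).biUnion fun y => (redW q y).image (List.cons y)

lemma card_okL (x : Fin (n + 2) × Bool) : (Finset.univ.filter (okL x)).card = 2 * n + 3 := by
  have : Finset.univ.filter (okL x) = Finset.univ.erase (x.1, !x.2) := by
    ext ⟨i, b⟩
    rcases x with ⟨i', b'⟩
    simp only [okL, Finset.mem_filter, Finset.mem_univ, true_and, Finset.mem_erase, ne_eq,
      Prod.mk.injEq, and_true, not_and]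
    constructor
    · rintro h rfl rfl
      have := h rfl
      cases b' <;> simp at this
    · rintro h rfl
      have := h rfl
      cases b <;> cases b' <;> simp_all
  rw [this, Finset.card_erase_of_mem (Finset.mem_univ _)]
  simp; omega

lemma redW_card (q : ℕ) : ∀ x : Fin (n + 2) × Bool, (redW q x).card = (2 * n + 3) ^ q := by
  induction q with
  | zero => intro x; simp [redW]
  | succ q ih =>
    intro x
    rw [redW, Finset.card_biUnion]
    · have : ∀ y ∈ Finset.univ.filter (okL x), ((redW q y).image (List.cons y)).card
          = (2 * n + 3) ^ q := by
        intro y _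
        rw [Finset.card_image_of_injective _ List.cons_injective, ih]
      rw [Finset.sum_congr rfl this, Finset.sum_const, card_okL, smul_eq_mul, pow_succ, mul_comm]
    · intro y _ z _ hyz
      refine Finset.disjoint_left.mpr ?_
      intro w hw hw'
      simp only [Finset.mem_image] at hw hw'
      obtain ⟨_, _, rfl⟩ := hw
      obtain ⟨_, _, h⟩ := hw'
      exact hyz (List.cons.inj h).1.symm

lemma redW_spec (q : ℕ) : ∀ (x : Fin (n + 2) × Bool), ∀ w ∈ redW q x,
    w.length = q ∧ List.IsChain okL (x :: w) := by
  induction q with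
  | zero => intro x w hw; simp [redW] at hw; simp [hw]
  | succ q ih =>
    intro x w hw
    simp only [redW, Finset.mem_biUnion, Finset.mem_filter, Finset.mem_univ, true_and,
      Finset.mem_image] at hw
    obtain ⟨y, hy, w, hw, rfl⟩ := hw
    obtain ⟨h1, h2⟩ := ih y w hw
    exact ⟨by simp [h1], List.isChain_cons_cons.mpr ⟨hy, h2⟩⟩

/-- `w` can be read after `x`, and afterwards everything which can be read after `y`. -/
def Trs (x : Fin (n + 2) × Bool) (w : List (Fin (n + 2) × Bool)) (y : Fin (n + 2) × Bool) : Prop :=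
  ∀ v, List.IsChain okL (y :: v) → List.IsChain okL (x :: (w ++ v))

lemma Trs.append {x y z : Fin (n + 2) × Bool} {w v : List (Fin (n + 2) × Bool)}
    (h1 : Trs x w y) (h2 : Trs y v z) : Trs x (w ++ v) z := by
  intro u hu
  rw [List.append_assoc]
  exact h1 _ (h2 _ hu)

lemma Trs.single {x y : Fin (n + 2) × Bool} (h : okL x y) : Trs x [y] y := by
  intro u hu
  exact List.isChain_cons_cons.mpr ⟨h, hu⟩

lemma Trs.nil (x : Fin (n + 2) × Bool) : Trs x [] x := fun _ hu => hu

lemma trs_replicate (x : Fin (n + 2) × Bool) (k : ℕ) : Trs x (List.replicate k x) x := by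
  induction k with
  | zero => exact Trs.nil x
  | succ k ih => exact (Trs.single (y := x) (fun _ => rfl)).append ih

lemma close_word (w : List (Fin (n + 2) × Bool)) : ∀ x, List.IsChain okL (x :: w) →
    ∃ e, Trs x (w ++ [e, (1, true)]) (1, true) := by
  induction w with
  | nil =>
    intro x _
    have : ∃ e : Fin (n + 2) × Bool, okL x e ∧ okL e (1, true) := by
      by_cases hx : x.1 = 1
      · exact ⟨(0, true), fun h => by rw [hx] at h; simp at h, fun h => by simp at h⟩
      · exact ⟨(1, true), fun h => absurd h hx, fun _ => rfl⟩
    obtain ⟨e, h1, h2⟩ := this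
    exact ⟨e, (Trs.single h1).append (Trs.single h2)⟩
  | cons y w ih =>
    intro x hx
    obtain ⟨h1, h2⟩ := List.isChain_cons_cons.mp hx
    obtain ⟨e, he⟩ := ih y h2
    exact ⟨e, (Trs.single h1).append he⟩

/-- Exchange the first generator and its inverse. -/
def flipL (x : Fin (n + 2) × Bool) : Fin (n + 2) × Bool := if x.1 = 0 then (x.1, !x.2) else x

lemma flipL_flipL (x : Fin (n + 2) × Bool) : flipL (flipL x) = x := by
  rcases x with ⟨i, b⟩
  by_cases h : i = 0 <;> simp [flipL, h]

lemma lev_flipL (x : Fin (n + 2) × Bool) : lev (flipL x) = - lev x := by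
  rcases x with ⟨i, b⟩
  by_cases h : i = 0 <;> cases b <;> simp [flipL, lev, h]

lemma okL_flipL {x y : Fin (n + 2) × Bool} (h : okL x y) : okL (flipL x) (flipL y) := by
  rcases x with ⟨i, b⟩
  rcases y with ⟨i', b'⟩
  unfold okL at *
  by_cases h1 : i = 0 <;> by_cases h2 : i' = 0 <;> simp_all [flipL]

lemma flip_chain {w : List (Fin (n + 2) × Bool)} (h : List.IsChain okL w) :
    List.IsChain okL (w.map flipL) := by
  rw [List.isChain_map]
  exact h.imp fun _ _ hxy => okL_flipL hxy

lemma flip_b : flipL ((1, true) : Fin (n + 2) × Bool) = (1, true) := by simp [flipL]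

lemma trs_flip {w : List (Fin (n + 2) × Bool)} (h : Trs (1, true) w (1, true)) :
    Trs (1, true) (w.map flipL) (1, true) := by
  intro v hv
  have h1 := flip_chain hv
  rw [List.map_cons, flip_b] at h1
  have h2 := flip_chain (h _ h1)
  rw [List.map_cons, flip_b, List.map_append, List.map_map] at h2
  have h3 : (flipL ∘ flipL : Fin (n + 2) × Bool → _) = id := funext flipL_flipL
  rwa [h3, List.map_id] at h2

lemma wlev_flip (w : List (Fin (n + 2) × Bool)) : wlev (w.map flipL) = - wlev w := by
  induction w with
  | nil => simp [wlev]
  | cons x w ih => rw [List.map_cons, wlev_cons, wlev_cons, ih, lev_flipL]; ring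

lemma lev_bdd (x : Fin (n + 2) × Bool) : -1 ≤ lev x ∧ lev x ≤ 1 := by
  unfold lev; split_ifs <;> simp

lemma wlev_bdd (w : List (Fin (n + 2) × Bool)) :
    -(w.length : ℤ) ≤ wlev w ∧ wlev w ≤ w.length := by
  induction w with
  | nil => simp [wlev]
  | cons x w ih =>
    rw [wlev_cons, List.length_cons]
    have := lev_bdd x
    push_cast
    constructor <;> omega

lemma noCross_len (w : List (Fin (n + 2) × Bool)) :
    ∀ k : ℤ, ((w.length : ℤ) ≤ k ∨ k < -(w.length : ℤ)) → noCross w k := by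
  induction w with
  | nil => intro k _; simp [noCross]
  | cons x w ih =>
    intro k hk
    rw [List.length_cons] at hk
    push_cast at hk
    have := lev_bdd x
    refine ⟨fun _ => ?_, ih _ (by omega)⟩
    split_ifs <;> omega

lemma exists_T (n q : ℕ) : ∃ T : Finset (List (Fin (n + 2) × Bool)),
    T.card = (2 * n + 3) ^ q ∧ ∀ t ∈ T, t.length = q + 2 ∧ Trs (1, true) t (1, true) := by
  have h : ∀ w : List (Fin (n + 2) × Bool), ∃ e, List.IsChain okL ((1, true) :: w) →
      Trs (1, true) (w ++ [e, (1, true)]) (1, true) := by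
    intro w
    by_cases hw : List.IsChain okL ((1, true) :: w)
    · obtain ⟨e, he⟩ := close_word w (1, true) hw
      exact ⟨e, fun _ => he⟩
    · exact ⟨(1, true), fun h => absurd h hw⟩
  choose e he using h
  refine ⟨(redW q (1, true)).image fun w => w ++ [e w, (1, true)], ?_, ?_⟩
  · rw [Finset.card_image_of_injOn, redW_card]
    intro w hw w' hw' heq
    refine (List.append_inj heq ?_).1
    rw [(redW_spec q _ w hw).1, (redW_spec q _ w' hw').1]
  · intro t ht
    rw [Finset.mem_image] at ht
    obtain ⟨w, hw, rfl⟩ := ht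
    obtain ⟨h1, h2⟩ := redW_spec q _ w hw
    exact ⟨by simp [h1], he w h2⟩

lemma exists_D (n q : ℕ) : ∃ (D : Finset (List (Fin (n + 2) × Bool))) (c : ℕ),
    D.card = c ^ 2 ∧ (2 * n + 3) ^ q ≤ c * (2 * q + 5) ∧
    ∀ d ∈ D, d.length = 2 * (q + 2) ∧ Trs (1, true) d (1, true) ∧ wlev d = 0 := by
  obtain ⟨T, hT, hT'⟩ := exists_T n q
  have hpig : ∃ z ∈ Finset.Icc (-((q : ℤ) + 2)) (q + 2),
      (2 * n + 3) ^ q ≤ (T.filter fun t => wlev t = z).card * (2 * q + 5) := by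
    by_contra! hcon
    have h1 := Finset.card_eq_sum_card_fiberwise (f := wlev) (s := T)
      (t := Finset.Icc (-((q : ℤ) + 2)) (q + 2)) (by
        intro t ht
        have := wlev_bdd t
        rw [(hT' t ht).1] at this
        push_cast at this
        simpa using this)
    have hcard : (Finset.Icc (-((q : ℤ) + 2)) (q + 2)).card = 2 * q + 5 := by
      rw [Int.card_Icc]; omega
    have h2 : T.card * (2 * q + 5) < (2 * q + 5) * (2 * n + 3) ^ q := by
      rw [h1, Finset.sum_mul]
      refine (Finset.sum_lt_sum_of_nonempty ?_ hcon).trans_eq ?_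
      · exact ⟨0, by simp; omega⟩
      · rw [Finset.sum_const, hcard, smul_eq_mul]
    rw [hT, mul_comm] at h2
    exact lt_irrefl _ h2
  obtain ⟨z, _, hz⟩ := hpig
  set U := T.filter fun t => wlev t = z with hU
  have hUs : ∀ t ∈ U, t.length = q + 2 ∧ Trs (1, true) t (1, true) ∧ wlev t = z := by
    intro t ht
    rw [hU, Finset.mem_filter] at ht
    exact ⟨(hT' t ht.1).1, (hT' t ht.1).2, ht.2⟩
  have hinj : Function.Injective (List.map (flipL (n := n))) :=
    List.map_injective_iff.mpr (Function.LeftInverse.injective flipL_flipL)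
  refine ⟨Finset.image₂ (· ++ ·) U (U.image (List.map flipL)), U.card, ?_, hz, ?_⟩
  · rw [card_append _ _ (q + 2) (fun t ht => (hUs t ht).1),
      Finset.card_image_of_injective _ hinj, sq]
  · intro d hd
    rw [Finset.mem_image₂] at hd
    obtain ⟨t, ht, t', ht', rfl⟩ := hd
    rw [Finset.mem_image] at ht'
    obtain ⟨t', ht', rfl⟩ := ht'
    obtain ⟨h1, h2, h3⟩ := hUs t ht
    obtain ⟨g1, g2, g3⟩ := hUs t' ht'
    refine ⟨?_, h2.append (trs_flip g2), ?_⟩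
    · rw [List.length_append, List.length_map, h1, g1]; ring
    · rw [wlev_append, wlev_flip, h3, g3]; ring

lemma powD_spec (D : Finset (List (Fin (n + 2) × Bool))) (Q : ℕ)
    (hD : ∀ d ∈ D, d.length = Q ∧ Trs (1, true) d (1, true) ∧ wlev d = 0) (K : ℕ) :
    ∀ c ∈ powW D K, Trs (1, true) c (1, true) ∧ wlev c = 0 ∧
      ∀ k : ℤ, ((Q : ℤ) ≤ k ∨ k < -(Q : ℤ)) → noCross c k := by
  induction K with
  | zero =>
    intro c hc
    simp [powW] at hc
    subst hc
    exact ⟨Trs.nil _, by simp [wlev], fun _ _ => trivial⟩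
  | succ K ih =>
    intro c hc
    rw [powW, Finset.mem_image₂] at hc
    obtain ⟨d, hd, c, hc, rfl⟩ := hc
    obtain ⟨h1, h2, h3⟩ := hD d hd
    obtain ⟨g1, g2, g3⟩ := ih c hc
    refine ⟨h2.append g1, by rw [wlev_append, h3, g2]; ring, fun k hk => ?_⟩
    rw [noCross_append, h3, sub_zero]
    exact ⟨noCross_len d k (by rw [h1]; exact hk), g3 k hk⟩

lemma lev_a : lev ((0, true) : Fin (n + 2) × Bool) = 1 := by simp [lev]

lemma lev_b : lev ((1, true) : Fin (n + 2) × Bool) = 0 := by simp [lev]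

lemma wlev_replicate (k : ℕ) :
    wlev (List.replicate k ((0, true) : Fin (n + 2) × Bool)) = k := by
  simp [wlev, lev_a]

lemma noCross_replicate (k : ℕ) : ∀ z : ℤ, (z < 0 ∨ (k : ℤ) ≤ z) →
    noCross (List.replicate k ((0, true) : Fin (n + 2) × Bool)) z := by
  induction k with
  | zero => intro z _; exact trivial
  | succ k ih =>
    intro z hz
    push_cast at hz
    rw [List.replicate_succ]
    refine ⟨fun _ => ?_, ih _ (by rw [lev_a]; omega)⟩
    simp only [if_true]; omega

/-- The block built around the word `c`. -/
def mkBlock (Q : ℕ) (c : List (Fin (n + 2) × Bool)) : List (Fin (n + 2) × Bool) :=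
  (0, true) :: (List.replicate Q (0, true) ++ ((1, true) :: (c ++ List.replicate (Q + 1) (0, true))))

lemma mkBlock_aux (Q : ℕ) (c : List (Fin (n + 2) × Bool)) (h2 : wlev c = 0)
    (h3 : ∀ k : ℤ, ((Q : ℤ) ≤ k ∨ k < -(Q : ℤ)) → noCross c k) (k : ℤ)
    (hk : k < 0 ∨ 2 * (Q : ℤ) + 1 ≤ k) :
    noCross (List.replicate Q (0, true) ++
      ((1, true) :: (c ++ List.replicate (Q + 1) ((0, true) : Fin (n + 2) × Bool)))) k := by
  rw [noCross_append, noCross, noCross_append, wlev_replicate, lev_b, h2]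
  refine ⟨noCross_replicate _ _ (by omega), fun h => by simp at h, h3 _ (by omega),
    noCross_replicate _ _ (by push_cast; omega)⟩

lemma mkBlock_isBlock (Q : ℕ) (c : List (Fin (n + 2) × Bool)) (h2 : wlev c = 0)
    (h3 : ∀ k : ℤ, ((Q : ℤ) ≤ k ∨ k < -(Q : ℤ)) → noCross c k) :
    IsBlock (2 * (Q : ℤ) + 2) (mkBlock Q c) := by
  have haux := mkBlock_aux Q c h2 h3
  refine ⟨?_, fun k hk => ?_, ?_, ⟨_, rfl, haux _ (by omega)⟩⟩
  · rw [mkBlock, wlev_cons, wlev_append, wlev_cons, wlev_append, wlev_replicate, wlev_replicate,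
      lev_a, lev_b, h2]
    push_cast; ring
  · refine ⟨fun _ => ?_, haux _ (by rw [lev_a]; omega)⟩
    simp only [if_true]; omega
  · refine ⟨fun _ => ?_, haux _ (by rw [lev_a]; omega)⟩
    simp only [if_true]; omega

lemma mkBlock_reduced (Q : ℕ) (c : List (Fin (n + 2) × Bool))
    (hc : Trs (1, true) c (1, true)) : FreeGroup.IsReduced (mkBlock Q c) := by
  have h1 : okL ((0, true) : Fin (n + 2) × Bool) (1, true) := fun h => by simp at h
  have h2 : okL ((1, true) : Fin (n + 2) × Bool) (0, true) := fun h => by simp at h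
  have h3 : Trs (n := n) (1, true) (List.replicate (Q + 1) (0, true)) (0, true) :=
    (Trs.single h2).append (trs_replicate _ Q)
  have h4 := (trs_replicate ((0, true) : Fin (n + 2) × Bool) Q).append
    ((Trs.single h1).append (hc.append h3))
  have h5 := h4 [] (List.isChain_singleton _)
  rw [List.append_nil] at h5
  exact h5

lemma exists_params (M r : ℝ) (hr : 1 ≤ r) (hrM : r < M) :
    ∃ q : ℕ, (2 * (q : ℝ) + 5) * r ^ (q + 2) < M ^ q := by
  have hM : 0 < M := by linarith
  have hx0 : 0 ≤ r / M := by positivity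
  have hx1 : r / M < 1 := by rw [div_lt_one hM]; exact hrM
  have hx : |r / M| < 1 := by rwa [abs_of_nonneg hx0]
  have t1 := tendsto_pow_const_mul_const_pow_of_abs_lt_one 1 hx
  have t0 := tendsto_pow_const_mul_const_pow_of_abs_lt_one 0 hx
  have t := (t1.const_mul (2 * r ^ 2)).add (t0.const_mul (5 * r ^ 2))
  simp only [mul_zero, add_zero] at t
  obtain ⟨q, hq⟩ := (t.eventually (gt_mem_nhds one_pos)).exists
  refine ⟨q, ?_⟩
  have hMq : 0 < M ^ q := by positivity
  rw [div_pow] at hq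
  have : 2 * r ^ 2 * ((q : ℝ) ^ 1 * (r ^ q / M ^ q)) + 5 * r ^ 2 * ((q : ℝ) ^ 0 * (r ^ q / M ^ q))
      = ((2 * (q : ℝ) + 5) * r ^ (q + 2)) / M ^ q := by
    field_simp; ring
  rw [this, div_lt_one hMq] at hq
  exact hq

lemma main_ge_two (n : ℕ) (r : ℝ) (hr : 1 ≤ r) (hrM : r < 2 * (n : ℝ) + 3) :
    ∃ (G : Type) (_ : Group G) (σ : Fin (n + 2) → G),
      Subgroup.closure (Set.range σ) = ⊤ ∧ IsAbelianByNilpotent G ∧ r ≤ growthRate σ := by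
  obtain ⟨q, hq⟩ := exists_params _ r hr hrM
  obtain ⟨D, c, hDc, hc, hD⟩ := exists_D n q
  set Q := 2 * (q + 2) with hQ
  have hr0 : 0 < r := by linarith
  have hcr : r ^ (q + 2) < c := by
    have h1 : (2 * (n : ℝ) + 3) ^ q ≤ c * (2 * q + 5) := by exact_mod_cast hc
    have h2 : (0 : ℝ) < 2 * q + 5 := by positivity
    nlinarith
  have hDr : r ^ Q < D.card := by
    rw [hDc, hQ, mul_comm, pow_mul]
    push_cast
    gcongr
  have hrQ : 0 < r ^ Q := by positivity
  obtain ⟨K, hK⟩ := pow_unbounded_of_one_lt (r ^ (2 * Q + 3))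
    (show 1 < (D.card : ℝ) / r ^ Q by rwa [one_lt_div hrQ])
  have hlenD : ∀ d ∈ D, d.length = Q := fun d hd => (hD d hd).1
  have hlenC := powW_length D Q hlenD K
  have hspec := powD_spec D Q hD K
  refine group_of_blocks (H := 2 * (Q : ℤ) + 2) (by omega) ((powW D K).image (mkBlock Q)) ?_ ?_
    (K * Q + (2 * Q + 3)) (by omega) ?_ r hr0.le ?_
  · intro u hu
    obtain ⟨c, hc, rfl⟩ := Finset.mem_image.mp hu
    exact mkBlock_isBlock Q c (hspec c hc).2.1 (hspec c hc).2.2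
  · intro u hu
    obtain ⟨c, hc, rfl⟩ := Finset.mem_image.mp hu
    exact mkBlock_reduced Q c (hspec c hc).1
  · intro u hu
    obtain ⟨c, hc, rfl⟩ := Finset.mem_image.mp hu
    simp [mkBlock, hlenC c hc]; ring
  · rw [Finset.card_image_of_injective, powW_card D Q hlenD]
    · rw [div_pow, lt_div_iff₀ (by positivity)] at hK
      push_cast
      calc r ^ (K * Q + (2 * Q + 3)) = r ^ (2 * Q + 3) * (r ^ Q) ^ K := by
            rw [← pow_mul, ← pow_add]; congr 1; ring
        _ ≤ _ := hK.le
    · intro u v huv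
      simpa [mkBlock] using huv

end Words

/-- Theorem 3. For every `m ≥ 1` and `ε > 0` there exists an
`m`-generated group `G` which is an extension of an abelian group by a nilpotent group
(hence amenable) whose growth rate satisfies `ω(G, A) ≥ 2m - 1 - ε`. -/
theorem abelian_by_nilpotent_with_large_growth_exists (m : ℕ) (hm : 1 ≤ m)
    (ε : ℝ) (hε : 0 < ε) :
    ∃ (G : Type) (instG : Group G) (σ : Fin m → G),
      @IsAbelianByNilpotentWithLargeGrowth m ε G instG σ := by
  suffices h : ∃ (G : Type) (instG : Group G) (σ : Fin m → G),
      Subgroup.closure (Set.range σ) = ⊤ ∧ IsAbelianByNilpotent G ∧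
        2 * (m : ℝ) - 1 - ε ≤ growthRate σ by
    obtain ⟨G, i, σ, h1, h2, h3⟩ := h
    exact ⟨G, i, σ, h1, h2, amenable_of_abNil G h2, h3⟩
  rcases Nat.lt_or_ge m 2 with hm2 | hm2
  · have hm1 : m = 1 := by omega
    subst hm1
    refine ⟨Unit, inferInstance, fun _ => 1, Subsingleton.elim _ _, ?_, ?_⟩
    · exact ⟨⊤, inferInstance, fun _ _ _ _ => rfl, inferInstance⟩
    · refine le_trans (b := (1 : ℝ)) (by push_cast; linarith) ?_
      refine growth_lower (fun _ => (1 : Unit)) 1 1 one_pos (fun j => ?_) 1 zero_le_one (by simp)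
      exact ⟨{List.replicate j (0, true)}, by simp, by simp, by simp⟩
  · obtain ⟨n, rfl⟩ := Nat.exists_eq_add_of_le' hm2
    obtain ⟨G, i, σ, h1, h2, h3⟩ := main_ge_two n (max 1 (2 * (n : ℝ) + 3 - ε)) (le_max_left _ _)
      (max_lt (by linarith [(Nat.cast_nonneg n : (0 : ℝ) ≤ n)]) (by linarith))
    refine ⟨G, i, σ, h1, h2, le_trans ?_ h3⟩
    refine le_trans (le_of_eq ?_) (le_max_right _ _)
    push_cast; ring
end
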